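/- arXiv:1911.07804 — 5 statements merged into one kernel-verified Lean document; each statement's English description precedes it below -/
import Mathlib

section
/- Let n ≥ 3 and let F = (F_{ij})_{0≤i,j≤n} be a symmetric 2-tensor field on ℝ^{1+n} whose components are smooth and compactly supported, with δF = 0 and trace(F) = 0. Let θ₀ = (1,0,…,0) ∈ S^{n−1} and suppose there is a neighborhood U of θ₀ in S^{n−1} such that Σ_{i,j=0}^n θ̃^i θ̃^j F̂_{ij}(ζ) = 0 for all θ ∈ U and all ζ ∈ ℝ^{1+n} with ζ·(1,θ) = 0. Then there is an open cone C ⊂ ℝ^{1+n} (an open set closed under multiplication by positive scalars) containing the space-like vector ζ₀ = (0,0,1,0,…,0) such that F̂_{ij}(ζ) = 0 for all ζ ∈ C and all 0 ≤ i,j ≤ n. -/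
/-- For `θ ∈ Sⁿ⁻¹`, the light direction `θ̃ = (1, θ) ∈ ℝ^{1+n}`. -/
def lightDir (n : ℕ) (θ : Fin n → ℝ) : Fin (n + 1) → ℝ :=
  Fin.cons 1 θ

/-- The Fourier transform `F̂ᵢⱼ(ζ) = ∫ Fᵢⱼ(z) e^{−i z·ζ} dz`. -/
noncomputable def fourierComp (n : ℕ)
    (F : Fin (n + 1) → Fin (n + 1) → (Fin (n + 1) → ℝ) → ℂ)
    (i j : Fin (n + 1)) (ζ : Fin (n + 1) → ℝ) : ℂ :=
  ∫ z : Fin (n + 1) → ℝ,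
    F i j z * Complex.exp (-Complex.I * ∑ k, (z k : ℂ) * (ζ k : ℂ))

open scoped InnerProductSpace Topology
open Filter

theorem aux_rot {E : Type*} [NormedAddCommGroup E] [InnerProductSpace ℝ E]
    (B : E →ₗ[ℝ] E →ₗ[ℝ] ℂ) (T p q e ζ : E)
    (hTe : ⟪T, e⟫_ℝ = 1) (hTz : ⟪T, ζ⟫_ℝ = 0)
    (hpe : ⟪p, e⟫_ℝ = 0) (hpz : ⟪p, ζ⟫_ℝ = 0) (hqe : ⟪q, e⟫_ℝ = 0) (hqz : ⟪q, ζ⟫_ℝ = 0)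
    (hpq : ⟪p, q⟫_ℝ = 0) (hTp : ⟪T, p⟫_ℝ = 0) (hTq : ⟪T, q⟫_ℝ = 0)
    (hn : ⟪p, p⟫_ℝ = ⟪q, q⟫_ℝ) (hv : ⟪T, T⟫_ℝ + ⟪p, p⟫_ℝ = 2)
    (hev : ∀ᶠ w in 𝓝 (T + p), ⟪w, e⟫_ℝ = 1 → ⟪w, w⟫_ℝ = 2 → ⟪w, ζ⟫_ℝ = 0 → B w w = 0) (s : ℝ) :
    B (T + Real.cos s • p + Real.sin s • q) (T + Real.cos s • p + Real.sin s • q) = 0 := by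
  have key : (fun s : ℝ => B (T + Real.cos s • p + Real.sin s • q)
      (T + Real.cos s • p + Real.sin s • q)) = 0 := by
    apply AnalyticOnNhd.eq_of_eventuallyEq (𝕜 := ℝ) (z₀ := 0)
    case hf =>
      intro s _
      simp only [map_add, map_smul, LinearMap.add_apply, LinearMap.smul_apply]
      fun_prop
    case hg =>
      intro s _
      exact analyticAt_const
    case hfg =>
      have hc : Tendsto (fun s : ℝ => T + Real.cos s • p + Real.sin s • q) (𝓝 0) (𝓝 (T + p)) := by
        have : Continuous (fun s : ℝ => T + Real.cos s • p + Real.sin s • q) := by fun_prop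
        simpa using this.tendsto 0
      filter_upwards [hc.eventually hev] with s hs
      apply hs
      · simp [inner_add_left, inner_smul_left, hTe, hpe, hqe]
      · have h1 : ⟪p, T⟫_ℝ = 0 := by rw [real_inner_comm]; exact hTp
        have h2 : ⟪q, T⟫_ℝ = 0 := by rw [real_inner_comm]; exact hTq
        have h3 : ⟪q, p⟫_ℝ = 0 := by rw [real_inner_comm]; exact hpq
        simp only [inner_add_left, inner_add_right, inner_smul_left, inner_smul_right, hTp, hTq, hpq,
          h1, h2, h3]
        simp
        have := Real.sin_sq_add_cos_sq s
        rw [← real_inner_self_eq_norm_sq, ← real_inner_self_eq_norm_sq, ← real_inner_self_eq_norm_sq, ← hn]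
        linear_combination hv + ⟪p, p⟫_ℝ * this
      · simp [inner_add_left, inner_smul_left, hTz, hpz, hqz]
  exact congrFun key s

theorem aux_all {E : Type*} [NormedAddCommGroup E] [InnerProductSpace ℝ E]
    (B : E →ₗ[ℝ] E →ₗ[ℝ] ℂ) (T p e ζ r : E) (R : ℝ) (hR : 0 < R)
    (hTe : ⟪T, e⟫_ℝ = 1) (hTz : ⟪T, ζ⟫_ℝ = 0)
    (hpe : ⟪p, e⟫_ℝ = 0) (hpz : ⟪p, ζ⟫_ℝ = 0) 
    (hTW : ∀ q, ⟪q, e⟫_ℝ = 0 → ⟪q, ζ⟫_ℝ = 0 → ⟪T, q⟫_ℝ = 0)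
    (hp : ⟪p, p⟫_ℝ = R) (hv : ⟪T, T⟫_ℝ + ⟪p, p⟫_ℝ = 2)
    (hr0 : r ≠ 0) (hre : ⟪r, e⟫_ℝ = 0) (hrz : ⟪r, ζ⟫_ℝ = 0) (hpr : ⟪p, r⟫_ℝ = 0)
    (hev : ∀ᶠ w in 𝓝 (T + p), ⟪w, e⟫_ℝ = 1 → ⟪w, w⟫_ℝ = 2 → ⟪w, ζ⟫_ℝ = 0 → B w w = 0)
    (q : E) (hqe : ⟪q, e⟫_ℝ = 0) (hqz : ⟪q, ζ⟫_ℝ = 0) (hq : ⟪q, q⟫_ℝ = R) :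
    B (T + q) (T + q) = 0 := by
  obtain ⟨a, ha⟩ : ∃ a, a = ⟪p, q⟫_ℝ / R := ⟨_, rfl⟩
  have haR : ⟪p, q⟫_ℝ = a * R := by rw [ha]; field_simp
  obtain ⟨q', hq'⟩ : ∃ q', q' = q - a • p := ⟨_, rfl⟩
  have hq'p : ⟪p, q'⟫_ℝ = 0 := by
    rw [hq', inner_sub_right, inner_smul_right, hp, haR]; ring
  have hq'q' : ⟪q', q'⟫_ℝ = R * (1 - a ^ 2) := by
    rw [hq']
    simp only [inner_sub_left, inner_sub_right, inner_smul_left, inner_smul_right, hp, hq,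
      real_inner_comm p q, haR]
    simp; ring
  have hq'e : ⟪q', e⟫_ℝ = 0 := by simp [hq', inner_sub_left, inner_smul_left, hqe, hpe]
  have hq'z : ⟪q', ζ⟫_ℝ = 0 := by simp [hq', inner_sub_left, inner_smul_left, hqz, hpz]
  have ha1 : a ^ 2 ≤ 1 := by
    have : 0 ≤ R * (1 - a ^ 2) := by rw [← hq'q']; exact real_inner_self_nonneg
    have := nonneg_of_mul_nonneg_right this hR
    linarith
  have norml : ∀ x : E, x ≠ 0 → ⟪Real.sqrt (R / ⟪x, x⟫_ℝ) • x, Real.sqrt (R / ⟪x, x⟫_ℝ) • x⟫_ℝ = R := by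
    intro x hx
    have : 0 < ⟪x, x⟫_ℝ := real_inner_self_pos.2 hx
    rw [inner_smul_left, inner_smul_right, ← mul_assoc]
    simp only [conj_trivial]
    rw [Real.mul_self_sqrt (by positivity)]
    field_simp
  obtain ⟨ψ, hψe, hψz, hpψ, hψ, hdec⟩ : ∃ ψ : E, ⟪ψ, e⟫_ℝ = 0 ∧ ⟪ψ, ζ⟫_ℝ = 0 ∧ ⟪p, ψ⟫_ℝ = 0 ∧
      ⟪ψ, ψ⟫_ℝ = R ∧ q' = Real.sqrt (1 - a ^ 2) • ψ := by
    by_cases h0 : q' = 0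
    · refine ⟨Real.sqrt (R / ⟪r, r⟫_ℝ) • r, ?_, ?_, ?_, norml r hr0, ?_⟩
      · simp [inner_smul_left, hre]
      · simp [inner_smul_left, hrz]
      · simp [inner_smul_right, hpr]
      · have : 1 - a ^ 2 = 0 := by
          rw [h0] at hq'q'
          simp at hq'q'
          rcases hq'q' with h | h
          · linarith
          · exact h
        rw [this, h0]; simp
    · have hpos : 0 < ⟪q', q'⟫_ℝ := real_inner_self_pos.2 h0
      refine ⟨Real.sqrt (R / ⟪q', q'⟫_ℝ) • q', ?_, ?_, ?_, norml q' h0, ?_⟩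
      · simp [inner_smul_left, hq'e]
      · simp [inner_smul_left, hq'z]
      · simp [inner_smul_right, hq'p]
      · have h1 : 0 < 1 - a ^ 2 := by
          rw [hq'q'] at hpos
          exact pos_of_mul_pos_right hpos hR.le
        rw [smul_smul, ← Real.sqrt_mul h1.le, hq'q']
        have : (1 - a ^ 2) * (R / (R * (1 - a ^ 2))) = 1 := by field_simp
        rw [this]; simp
  have h := aux_rot B T p ψ e ζ hTe hTz hpe hpz hψe hψz hpψ (hTW p hpe hpz) (hTW ψ hψe hψz)
    (hp.trans hψ.symm) hv hev (Real.arccos a)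
  have ha2 := abs_le.1 (abs_le_one_iff_mul_self_le_one.2 (by nlinarith : a * a ≤ 1))
  rw [Real.cos_arccos ha2.1 ha2.2, Real.sin_arccos, ← hdec, hq', add_assoc, add_sub_cancel] at h
  exact h

theorem aux_core {E : Type*} [NormedAddCommGroup E] [InnerProductSpace ℝ E] [FiniteDimensional ℝ E]
    (hdim : 4 ≤ Module.finrank ℝ E)
    (B : E →ₗ[ℝ] E →ₗ[ℝ] ℂ) (hB : ∀ x y, B x y = B y x) (e ζ v : E) (he : ⟪e, e⟫_ℝ = 1)
    (hz : 2 * ⟪ζ, e⟫_ℝ ^ 2 < ⟪ζ, ζ⟫_ℝ) (hve : ⟪v, e⟫_ℝ = 1) (hvv : ⟪v, v⟫_ℝ = 2)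
    (hvz : ⟪v, ζ⟫_ℝ = 0) (hBz : ∀ x, B ζ x = 0)
    (hev : ∀ᶠ w in 𝓝 v, ⟪w, e⟫_ℝ = 1 → ⟪w, w⟫_ℝ = 2 → ⟪w, ζ⟫_ℝ = 0 → B w w = 0) :
    ∃ (c : ℂ) (T : E) (R : ℝ), R ≤ 1 ∧ 1 ≤ ⟪T, T⟫_ℝ ∧ ∀ x y, B x y = c * 
      ((⟪x, y⟫_ℝ - ⟪x, ζ⟫_ℝ * ⟪y, ζ⟫_ℝ / ⟪ζ, ζ⟫_ℝ
        - (1 + R / ⟪T, T⟫_ℝ) * (⟪x, T⟫_ℝ * ⟪y, T⟫_ℝ / ⟪T, T⟫_ℝ) : ℝ) : ℂ) := by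
  obtain ⟨z, hzdef⟩ : ∃ z, z = ⟪ζ, e⟫_ℝ := ⟨_, rfl⟩
  obtain ⟨N, hN⟩ : ∃ N, N = ⟪ζ, ζ⟫_ℝ := ⟨_, rfl⟩
  rw [← hzdef, ← hN] at hz
  obtain ⟨m, hm⟩ : ∃ m, m = N - z ^ 2 := ⟨_, rfl⟩
  have hm0 : z ^ 2 < m := by linarith
  have hmpos : 0 < m := by nlinarith [sq_nonneg z]
  have hNpos : 0 < N := by nlinarith [sq_nonneg z]
  have hez : ⟪e, ζ⟫_ℝ = z := by rw [real_inner_comm, hzdef]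
  obtain ⟨T, hT⟩ : ∃ T, T = e - (z / m) • (ζ - z • e) := ⟨_, rfl⟩
  obtain ⟨R, hR⟩ : ∃ R, R = 1 - z ^ 2 / m := ⟨_, rfl⟩
  have hRpos : 0 < R := by
    rw [hR, sub_pos, div_lt_one hmpos]; exact hm0
  have hTe : ⟪T, e⟫_ℝ = 1 := by
    simp only [hT, inner_sub_left, inner_smul_left, he, ← hzdef]; simp
  have hTz : ⟪T, ζ⟫_ℝ = 0 := by
    simp only [hT, inner_sub_left, inner_smul_left, hez, ← hN]; simp
    have : N = m + z ^ 2 := by linarith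
    rw [this]; field_simp; ring
  have hTW : ∀ q, ⟪q, e⟫_ℝ = 0 → ⟪q, ζ⟫_ℝ = 0 → ⟪T, q⟫_ℝ = 0 := by
    intro q h1 h2
    rw [real_inner_comm] at h1 h2
    simp [hT, inner_sub_left, inner_smul_left, h1, h2]
  have hTT : ⟪T, T⟫_ℝ = 1 + z ^ 2 / m := by
    nth_rewrite 2 [hT]
    simp only [inner_sub_right, inner_smul_right, hTe, hTz]
    ring
  have hdec0 : ∀ x, ⟪x, ζ⟫_ℝ = 0 → ⟪x, T⟫_ℝ = 0 → ⟪x, e⟫_ℝ = 0 := by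
    intro x h1 h2
    rw [hT] at h2
    simp only [inner_sub_right, inner_smul_right, h1] at h2
    have h3 : (1 + z ^ 2 / m) * ⟪x, e⟫_ℝ = 0 := by linear_combination h2
    rcases mul_eq_zero.1 h3 with h | h
    · have : 0 ≤ z ^ 2 / m := by positivity
      linarith
    · exact h
  obtain ⟨p, hp⟩ : ∃ p, p = v - T := ⟨_, rfl⟩
  have hvp : v = T + p := by rw [hp]; abel
  have hpe : ⟪p, e⟫_ℝ = 0 := by simp [hp, inner_sub_left, hve, hTe]
  have hpz : ⟪p, ζ⟫_ℝ = 0 := by simp only [hp, inner_sub_left, hvz, hTz]; simp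
  have hTp := hTW p hpe hpz
  have hpT : ⟪p, T⟫_ℝ = 0 := by rw [real_inner_comm]; exact hTp
  have hv2 : ⟪T, T⟫_ℝ + ⟪p, p⟫_ℝ = 2 := by
    rw [hvp] at hvv
    simp only [inner_add_left, inner_add_right, hTp, hpT] at hvv
    linarith
  have hpp : ⟪p, p⟫_ℝ = R := by rw [hTT] at hv2; rw [hR]; linarith
  obtain ⟨r, hr0, hre, hrz, hpr⟩ : ∃ r : E, r ≠ 0 ∧ ⟪r, e⟫_ℝ = 0 ∧ ⟪r, ζ⟫_ℝ = 0 ∧ ⟪p, r⟫_ℝ = 0 := by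
    let f : E →ₗ[ℝ] (Fin 3 → ℝ) := LinearMap.pi ![innerₗ E e, innerₗ E ζ, innerₗ E p]
    have : f.ker ≠ ⊥ := LinearMap.ker_ne_bot_of_finrank_lt (by simp; omega)
    obtain ⟨r, hr, hr0⟩ := Submodule.exists_mem_ne_zero_of_ne_bot this
    rw [LinearMap.mem_ker] at hr
    have h0 := congrFun hr 0
    have h1 := congrFun hr 1
    have h2 := congrFun hr 2
    simp [f] at h0 h1 h2
    exact ⟨r, hr0, by rw [real_inner_comm]; exact h0, by rw [real_inner_comm]; exact h1, h2⟩
  rw [hvp] at hev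
  have hall := aux_all B T p e ζ r R hRpos hTe hTz hpe hpz hTW hpp hv2 hr0 hre hrz hpr hev
  have hsplit : ∀ q, ⟪q, e⟫_ℝ = 0 → ⟪q, ζ⟫_ℝ = 0 → ⟪q, q⟫_ℝ = R → B T q = 0 ∧ B T T + B q q = 0 := by
    intro q h1 h2 h3
    have a1 := hall q h1 h2 h3
    have a2 := hall (-q) (by simp [h1]) (by simp [h2]) (by simp only [inner_neg_neg, h3])
    simp only [map_add, map_neg, LinearMap.add_apply, LinearMap.neg_apply, hB q T] at a1 a2
    exact ⟨by linear_combination (a1 - a2) / 4, by linear_combination (a1 + a2) / 2⟩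
  obtain ⟨c, hc⟩ : ∃ c : ℂ, c = - B T T / R := ⟨_, rfl⟩
  have hRC : (R : ℂ) ≠ 0 := by exact_mod_cast hRpos.ne'
  have hBT : B T T = - c * R := by rw [hc]; field_simp
  have hsc : ∀ q, ⟪q, e⟫_ℝ = 0 → ⟪q, ζ⟫_ℝ = 0 → B T q = 0 ∧ B q q = c * (⟪q, q⟫_ℝ : ℂ) := by
    intro q h1 h2
    by_cases h0 : q = 0
    · simp [h0]
    have hpos : 0 < ⟪q, q⟫_ℝ := real_inner_self_pos.2 h0
    obtain ⟨l, hl⟩ : ∃ l, l = Real.sqrt (R / ⟪q, q⟫_ℝ) := ⟨_, rfl⟩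
    have hl0 : 0 < l := by rw [hl]; apply Real.sqrt_pos.2; positivity
    have hll : l * l * ⟪q, q⟫_ℝ = R := by
      rw [hl, Real.mul_self_sqrt (by positivity)]; field_simp
    have h := hsplit (l • q) (by simp [inner_smul_left, h1]) (by simp [inner_smul_left, h2])
      (by rw [inner_smul_left, inner_smul_right, ← hll]; simp; ring)
    simp only [map_smul, LinearMap.smul_apply, hBT, Complex.real_smul] at h
    have hlC : (l : ℂ) ≠ 0 := by exact_mod_cast hl0.ne'
    have hllC : (l : ℂ) * l * (⟪q, q⟫_ℝ : ℂ) = R := by exact_mod_cast hll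
    refine ⟨by simpa [hlC] using h.1, ?_⟩
    have h2 := h.2
    rw [← hllC] at h2
    apply mul_left_cancel₀ hlC
    apply mul_left_cancel₀ hlC
    linear_combination h2
  have hpol : ∀ q q', ⟪q, e⟫_ℝ = 0 → ⟪q, ζ⟫_ℝ = 0 → ⟪q', e⟫_ℝ = 0 → ⟪q', ζ⟫_ℝ = 0 →
      B q q' = c * (⟪q, q'⟫_ℝ : ℂ) := by
    intro q q' h1 h2 h3 h4
    have a1 := (hsc (q + q') (by simp [inner_add_left, h1, h3]) (by simp [inner_add_left, h2, h4])).2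
    have a2 := (hsc q h1 h2).2
    have a3 := (hsc q' h3 h4).2
    simp only [map_add, LinearMap.add_apply, hB q' q, inner_add_left, inner_add_right,
      real_inner_comm q q'] at a1
    push_cast at a1
    linear_combination (a1 - a2 - a3) / 2
  have hTTpos : 0 < ⟪T, T⟫_ℝ := by rw [hTT]; positivity
  have hzT : ⟪ζ, T⟫_ℝ = 0 := by rw [real_inner_comm]; exact hTz
  refine ⟨c, T, R, ?_, ?_, ?_⟩
  · rw [hR]; have : 0 ≤ z ^ 2 / m := by positivity
    linarith
  · rw [hTT]; have : 0 ≤ z ^ 2 / m := by positivity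
    linarith
  intro x y
  rw [← hN]
  obtain ⟨D, hD⟩ : ∃ D, D = ⟪T, T⟫_ℝ := ⟨_, rfl⟩
  rw [← hD] at hTTpos ⊢
  have dec : ∀ x, ∃ w, x = (⟪x, ζ⟫_ℝ / N) • ζ + (⟪x, T⟫_ℝ / D) • T + w ∧ ⟪w, e⟫_ℝ = 0 ∧ ⟪w, ζ⟫_ℝ = 0
      ∧ ⟪w, T⟫_ℝ = 0 := by
    intro x
    have h1 : ⟪x - ((⟪x, ζ⟫_ℝ / N) • ζ + (⟪x, T⟫_ℝ / D) • T), ζ⟫_ℝ = 0 := by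
      simp only [inner_sub_left, inner_add_left, inner_smul_left, hTz, ← hN]
      simp; field_simp; ring
    have h2 : ⟪x - ((⟪x, ζ⟫_ℝ / N) • ζ + (⟪x, T⟫_ℝ / D) • T), T⟫_ℝ = 0 := by
      simp only [inner_sub_left, inner_add_left, inner_smul_left, hzT, ← hD]
      simp; field_simp; ring
    exact ⟨_, by abel, hdec0 _ h1 h2, h1, h2⟩
  obtain ⟨w, hx, hwe, hwz, hwT⟩ := dec x
  obtain ⟨w', hy, hwe', hwz', hwT'⟩ := dec y
  obtain ⟨α, hα⟩ : ∃ α, α = ⟪x, ζ⟫_ℝ := ⟨_, rfl⟩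
  obtain ⟨α', hα'⟩ : ∃ α, α = ⟪y, ζ⟫_ℝ := ⟨_, rfl⟩
  obtain ⟨β, hβ⟩ : ∃ α, α = ⟪x, T⟫_ℝ := ⟨_, rfl⟩
  obtain ⟨β', hβ'⟩ : ∃ α, α = ⟪y, T⟫_ℝ := ⟨_, rfl⟩
  rw [← hα, ← hβ] at hx ⊢
  rw [← hα', ← hβ'] at hy ⊢
  have hTw' := hTW w' hwe' hwz'
  have hzw' : ⟪ζ, w'⟫_ℝ = 0 := by rw [real_inner_comm]; exact hwz'
  have hxy : ⟪x, y⟫_ℝ = α * α' / N + β * β' / D + ⟪w, w'⟫_ℝ := by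
    rw [hx, hy]
    simp only [inner_add_left, inner_add_right, inner_smul_left, inner_smul_right, hTz, hzT, hwz, hwT,
      hTw', hzw', ← hN, ← hD]
    simp; field_simp
  have hBxy : B x y = (β / D : ℝ) * (β' / D : ℝ) * (- c * R) + c * (⟪w, w'⟫_ℝ : ℂ) := by
    rw [hx, hy]
    have e1 := (hsc w hwe hwz).1
    have e2 := (hsc w' hwe' hwz').1
    have e3 := hpol w w' hwe hwz hwe' hwz'
    simp only [map_add, map_smul, LinearMap.add_apply, LinearMap.smul_apply, hBz, hB T ζ, hB w ζ, hB w T,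
      e1, e2, e3, hBT, Complex.real_smul]
    ring
  rw [hBxy, hxy]
  push_cast
  have hDC : (D : ℂ) ≠ 0 := by exact_mod_cast hTTpos.ne'
  have hNC : (N : ℂ) ≠ 0 := by exact_mod_cast hNpos.ne'
  field_simp
  ring

theorem aux_exp_deriv (m : ℕ) (ζ : Fin m → ℝ) (z : Fin m → ℝ) :
    HasFDerivAt (fun z : Fin m → ℝ => Complex.exp (-Complex.I * ∑ k, (z k : ℂ) * (ζ k : ℂ)))
      (Complex.exp (-Complex.I * ∑ k, (z k : ℂ) * (ζ k : ℂ)) • ((-Complex.I) •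
        ∑ k, (ζ k : ℂ) • (Complex.ofRealCLM.comp (ContinuousLinearMap.proj (R := ℝ) (φ := fun _ : Fin m => ℝ) k)))) z := by
  apply HasFDerivAt.cexp
  apply HasFDerivAt.const_mul
  apply HasFDerivAt.fun_sum
  intro k _
  apply HasFDerivAt.mul_const
  exact (Complex.ofRealCLM.comp (ContinuousLinearMap.proj (R := ℝ) (φ := fun _ : Fin m => ℝ) k)).hasFDerivAt

theorem aux_fourier_deriv (m : ℕ) (f : (Fin m → ℝ) → ℂ) (hf : ContDiff ℝ (⊤ : ℕ∞) f)
    (hs : HasCompactSupport f) (ζ : Fin m → ℝ) (i : Fin m) :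
    ∫ z : Fin m → ℝ, fderiv ℝ f z (Pi.single i 1) * Complex.exp (-Complex.I * ∑ k, (z k : ℂ) * (ζ k : ℂ))
    = Complex.I * ζ i * ∫ z : Fin m → ℝ, f z * Complex.exp (-Complex.I * ∑ k, (z k : ℂ) * (ζ k : ℂ)) := by
  have hfd : ∀ z, fderiv ℝ (fun z : Fin m → ℝ => Complex.exp (-Complex.I * ∑ k, (z k : ℂ) * (ζ k : ℂ))) z
      (Pi.single i 1) = Complex.exp (-Complex.I * ∑ k, (z k : ℂ) * (ζ k : ℂ)) * (-Complex.I * ζ i) := by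
    intro z
    rw [(aux_exp_deriv m ζ z).fderiv]
    simp [Pi.single_apply, apply_ite]
  have hce : Continuous (fun z : Fin m → ℝ => Complex.exp (-Complex.I * ∑ k, (z k : ℂ) * (ζ k : ℂ))) := by
    fun_prop
  have hcd : Continuous (fun z => fderiv ℝ f z (Pi.single i 1)) :=
    (hf.continuous_fderiv (by simp)).clm_apply continuous_const
  have h := integral_mul_fderiv_eq_neg_fderiv_mul_of_integrable (μ := MeasureTheory.volume) (f := f)
    (g := fun z : Fin m → ℝ => Complex.exp (-Complex.I * ∑ k, (z k : ℂ) * (ζ k : ℂ)))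
    (v := Pi.single i 1) ?_ ?_ ?_ ?_ ?_
  · simp only [hfd] at h
    rw [← neg_eq_iff_eq_neg] at h
    rw [← h, ← MeasureTheory.integral_const_mul, ← MeasureTheory.integral_neg]
    congr 1; ext z; ring
  · exact (hcd.mul hce).integrable_of_hasCompactSupport ((hs.fderiv_apply ℝ _).mul_right)
  · simp only [hfd]
    exact (hf.continuous.mul (hce.mul continuous_const)).integrable_of_hasCompactSupport hs.mul_right
  · exact (hf.continuous.mul hce).integrable_of_hasCompactSupport hs.mul_right
  · intro x _; exact hf.differentiable (by simp) x
  · intro x _; exact (aux_exp_deriv m ζ x).differentiableAt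

theorem aux_int (m : ℕ) (f : (Fin m → ℝ) → ℂ) (hf : Continuous f)
    (hs : HasCompactSupport f) (ζ : Fin m → ℝ) :
    MeasureTheory.Integrable
      (fun z : Fin m → ℝ => f z * Complex.exp (-Complex.I * ∑ k, (z k : ℂ) * (ζ k : ℂ))) := by
  have hce : Continuous (fun z : Fin m → ℝ => Complex.exp (-Complex.I * ∑ k, (z k : ℂ) * (ζ k : ℂ))) := by
    fun_prop
  exact (hf.mul hce).integrable_of_hasCompactSupport hs.mul_right

theorem aux_pointwise (n : ℕ) (hn : 3 ≤ n) (A : Fin (n + 1) → Fin (n + 1) → ℂ)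
    (hsym : ∀ i j, A i j = A j i) (ζ : Fin (n + 1) → ℝ) (hdiv : ∀ j, ∑ i, (ζ i : ℂ) * A i j = 0)
    (htr : ∑ i, A i i = 0) (θs θ₀ : Fin n → ℝ) (ε : ℝ)
    (h1 : ∑ i, θs i ^ 2 = 1) (h2 : ‖θs - θ₀‖ < ε) (h3 : ∑ k, ζ k * lightDir n θs k = 0)
    (hz : 2 * ζ 0 ^ 2 < ∑ k, ζ k ^ 2)
    (hslice : ∀ θ : Fin n → ℝ, ∑ i, θ i ^ 2 = 1 → ‖θ - θ₀‖ < ε →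
      ∑ k, ζ k * lightDir n θ k = 0 →
        ∑ i, ∑ j, ((lightDir n θ i : ℝ) : ℂ) * ((lightDir n θ j : ℝ) : ℂ) * A i j = 0)
    (i j : Fin (n + 1)) : A i j = 0 := by
  let B : EuclideanSpace ℝ (Fin (n + 1)) →ₗ[ℝ] EuclideanSpace ℝ (Fin (n + 1)) →ₗ[ℝ] ℂ :=
    LinearMap.mk₂ ℝ (fun x y => ∑ i, ∑ j, ((x i : ℝ) : ℂ) * ((y j : ℝ) : ℂ) * A i j)
      (by intro x x' y; simp [add_mul, Finset.sum_add_distrib])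
      (by intro c x y; simp [Finset.mul_sum, mul_assoc])
      (by intro x x' y; simp [add_mul, mul_add, Finset.sum_add_distrib])
      (by intro c x y
          simp only [PiLp.smul_apply, smul_eq_mul, Complex.ofReal_mul, Complex.real_smul, Finset.mul_sum]
          refine Finset.sum_congr rfl fun i _ => Finset.sum_congr rfl fun j _ => by ring)
  have hBdef : ∀ x y, B x y = ∑ i, ∑ j, ((x i : ℝ) : ℂ) * ((y j : ℝ) : ℂ) * A i j := fun _ _ => rfl
  have hin : ∀ x y : EuclideanSpace ℝ (Fin (n + 1)), ⟪x, y⟫_ℝ = ∑ k, y k * x k := by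
    intro x y; simp [PiLp.inner_apply]
  have hB : ∀ x y, B x y = B y x := by
    intro x y
    rw [hBdef, hBdef, Finset.sum_comm]
    refine Finset.sum_congr rfl fun i _ => Finset.sum_congr rfl fun j _ => ?_
    rw [hsym]; ring
  have hw : ∀ w : EuclideanSpace ℝ (Fin (n + 1)), ⟪w, EuclideanSpace.single 0 1⟫_ℝ = w 0 := by
    intro w; rw [hin]; simp
  have hBs : ∀ i j, B (EuclideanSpace.single i 1) (EuclideanSpace.single j 1) = A i j := by
    intro i j
    rw [hBdef, Finset.sum_eq_single i, Finset.sum_eq_single j]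
    · simp
    · intro b _ hb; simp [hb]
    · simp
    · intro b _ hb; simp [hb]
    · simp
  obtain ⟨c, T, R, hR, hT, hform⟩ := aux_core (E := EuclideanSpace ℝ (Fin (n + 1)))
    (by simp; omega) B hB (EuclideanSpace.single 0 1) (WithLp.toLp 2 ζ)
    (WithLp.toLp 2 (lightDir n θs)) (by rw [hw]; simp)
    (by rw [hw, hin]; simpa [← sq] using hz)
    (by rw [hw]; simp [lightDir])
    (by rw [hin, Fin.sum_univ_succ]; simp [lightDir, ← sq, h1]; norm_num)
    (by rw [hin]; exact h3)
    (by
      intro x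
      rw [hBdef, Finset.sum_comm]
      apply Finset.sum_eq_zero
      intro j _
      have := hdiv j
      calc _ = (x j : ℂ) * ∑ i, (ζ i : ℂ) * A i j := by
            rw [Finset.mul_sum]; exact Finset.sum_congr rfl fun i _ => by simp; ring
        _ = 0 := by rw [this, mul_zero])
    (by
      have hc : Continuous (fun w : EuclideanSpace ℝ (Fin (n + 1)) =>
          ‖(fun i : Fin n => w i.succ) - θ₀‖) := by fun_prop
      have := hc.tendsto (WithLp.toLp 2 (lightDir n θs))
      have := this.eventually (eventually_lt_nhds (b := ε) (by simpa [lightDir] using h2))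
      filter_upwards [this] with w hwε hw1 hw2 hw3
      have hl : lightDir n (fun i : Fin n => w i.succ) = fun k => w k := by
        ext k
        rw [hw] at hw1
        refine Fin.cases ?_ (fun k => ?_) k
        · simp [lightDir, hw1]
        · simp [lightDir]
      have := hslice (fun i : Fin n => w i.succ) ?_ hwε ?_
      · rw [hl] at this
        exact this
      · rw [hin, Fin.sum_univ_succ] at hw2
        rw [hw] at hw1
        rw [hw1] at hw2
        simp only [sq]
        linarith
      · rw [hl]
        rw [hin] at hw3
        exact hw3)
  have hNpos : 0 < ∑ k, ζ k ^ 2 := lt_of_le_of_lt (by positivity) hz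
  have hNE : ⟪(WithLp.toLp 2 ζ : EuclideanSpace ℝ (Fin (n + 1))), WithLp.toLp 2 ζ⟫_ℝ = ∑ k, ζ k ^ 2 := by
    rw [hin]; simp [sq]
  have hTE : ∑ k, T k ^ 2 = ⟪T, T⟫_ℝ := by
    rw [hin]; simp [sq]
  have hinl : ∀ (w : EuclideanSpace ℝ (Fin (n + 1))) i, ⟪EuclideanSpace.single i 1, w⟫_ℝ = w i := by
    intro w i; rw [hin]; simp [Pi.single_apply]
  have hc0 : c = 0 := by
    have e1 : ∑ i, A i i = c * (((n : ℝ) - 1 - R / ⟪T, T⟫_ℝ : ℝ) : ℂ) := by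
      simp_rw [← hBs, hform, ← Finset.mul_sum]
      rw [← Complex.ofReal_sum]
      congr 2
      simp_rw [hinl]
      rw [Finset.sum_sub_distrib, Finset.sum_sub_distrib, ← Finset.mul_sum, ← Finset.sum_div,
        ← Finset.sum_div]
      simp_rw [← sq]
      rw [hTE, hNE, div_self hNpos.ne', div_self (by linarith)]
      simp
      ring
    rw [htr] at e1
    have h5 : R / ⟪T, T⟫_ℝ ≤ 1 := by rw [div_le_one (by linarith)]; linarith
    have h6 : (3 : ℝ) ≤ n := by exact_mod_cast hn
    have h7 : ((((n : ℝ) - 1 - R / ⟪T, T⟫_ℝ : ℝ) : ℂ)) ≠ 0 := by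
      rw [Complex.ofReal_ne_zero]; linarith
    rcases mul_eq_zero.1 e1.symm with h | h
    · exact h
    · exact absurd h h7
  rw [← hBs, hform, hc0, zero_mul]

/-- Main lemma: if `F` is a smooth compactly supported divergence-free
trace-free symmetric 2-tensor field on `ℝ^{1+n}` (`n ≥ 3`) and
`Σᵢⱼ θ̃ⁱ θ̃ʲ F̂ᵢⱼ(ζ) = 0` for all `θ` near `θ₀ = (1,0,…,0)` and all
`ζ ⊥ (1,θ)`, then `F̂ᵢⱼ` vanishes on an open cone containing the space-like
vector `ζ₀ = (0,0,1,0,…,0)`. -/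
theorem stmt_4 (n : ℕ) (hn : 3 ≤ n)
    (F : Fin (n + 1) → Fin (n + 1) → (Fin (n + 1) → ℝ) → ℂ)
    (hsym : ∀ i j, F i j = F j i)
    (hsmooth : ∀ i j, ContDiff ℝ (⊤ : ℕ∞) (F i j))
    (hsupp : ∀ i j, HasCompactSupport (F i j))
    (hdiv : ∀ (j : Fin (n + 1)) (z : Fin (n + 1) → ℝ),
      ∑ i, fderiv ℝ (F i j) z (Pi.single i 1) = 0)
    (htrace : ∀ z : Fin (n + 1) → ℝ, ∑ i, F i i z = 0)
    (ε : ℝ) (hε : 0 < ε)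
    (hslice : ∀ θ : Fin n → ℝ, ∑ i, θ i ^ 2 = 1 →
      ‖θ - (fun i : Fin n => if (i : ℕ) = 0 then 1 else 0)‖ < ε →
      ∀ ζ : Fin (n + 1) → ℝ, ∑ k, ζ k * lightDir n θ k = 0 →
        ∑ i, ∑ j, ((lightDir n θ i : ℝ) : ℂ) * ((lightDir n θ j : ℝ) : ℂ) *
          fourierComp n F i j ζ = 0) :
    ∃ C : Set (Fin (n + 1) → ℝ), IsOpen C ∧
      (∀ ζ ∈ C, ∀ c : ℝ, 0 < c → c • ζ ∈ C) ∧
      (fun i : Fin (n + 1) => if (i : ℕ) = 2 then (1 : ℝ) else 0) ∈ C ∧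
      ∀ ζ ∈ C, ∀ i j : Fin (n + 1), fourierComp n F i j ζ = 0 := by
  obtain ⟨m, rfl⟩ : ∃ m, n = m + 3 := ⟨n - 3, by omega⟩
  obtain ⟨θ, hθ⟩ : ∃ θ : ℝ → Fin (m + 3) → ℝ, θ = fun s (i : Fin (m + 3)) =>
    if (i : ℕ) = 0 then Real.cos s else if (i : ℕ) = 1 then Real.sin s else 0 := ⟨_, rfl⟩
  have hθ0 : ∀ s, θ s 0 = Real.cos s := by intro s; simp [hθ]
  have hθ1 : ∀ s, θ s 1 = Real.sin s := by intro s; simp [hθ]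
  have hθ2 : ∀ s (i : Fin (m + 1)), θ s i.succ.succ = 0 := by intro s i; simp [hθ]
  have hsum : ∀ (ζ : Fin (m + 3 + 1) → ℝ) (s : ℝ), ∑ k, ζ k * lightDir (m + 3) (θ s) k =
      ζ 0 + ζ 1 * Real.cos s + ζ 2 * Real.sin s := by
    intro ζ s
    rw [Fin.sum_univ_succ, Fin.sum_univ_succ, Fin.sum_univ_succ]
    simp only [lightDir, Fin.cons_zero, Fin.cons_succ, hθ2, mul_zero, Finset.sum_const_zero]
    have e1 : θ s (Fin.succ 0) = Real.sin s := hθ1 s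
    rw [hθ0, e1]
    simp
    ring_nf
  have hunit : ∀ s, ∑ i, θ s i ^ 2 = 1 := by
    intro s
    rw [Fin.sum_univ_succ, Fin.sum_univ_succ]
    have e1 : θ s (Fin.succ 0) = Real.sin s := hθ1 s
    rw [hθ0, e1]; simp [hθ2]
  have hcont : Continuous θ := by
    rw [hθ]
    refine continuous_pi fun i => ?_
    by_cases h0 : (i : ℕ) = 0
    · simp only [h0, if_true]; fun_prop
    · by_cases h1 : (i : ℕ) = 1
      · simp only [h1]; simp; fun_prop
      · simp only [h0, h1, if_false]; fun_prop
  obtain ⟨δ, hδ, hball⟩ : ∃ δ > 0, ∀ s : ℝ, |s| < δ →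
      ‖θ s - (fun i : Fin (m + 3) => if (i : ℕ) = 0 then 1 else 0)‖ < ε := by
    have hz : θ 0 = (fun i : Fin (m + 3) => if (i : ℕ) = 0 then 1 else 0) := by
      rw [hθ]; simp
    obtain ⟨δ, hδ, h⟩ := Metric.continuous_iff.1 hcont 0 ε hε
    refine ⟨δ, hδ, fun s hs => ?_⟩
    have := h s (by simpa [Real.dist_eq] using hs)
    rwa [dist_eq_norm, hz] at this
  obtain ⟨s₀, hs0, hs1, hsδ⟩ : ∃ s₀ : ℝ, 0 < s₀ ∧ s₀ < 1 ∧ s₀ < δ :=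
    ⟨min 1 δ / 2, by positivity, by linarith [min_le_left 1 δ], by linarith [min_le_right 1 δ]⟩
  have hsin : 0 < Real.sin s₀ := Real.sin_pos_of_pos_of_lt_pi hs0 (by linarith [Real.pi_gt_three])
  refine ⟨{ζ | 0 < ζ 0 + ζ 1 * Real.cos s₀ + ζ 2 * Real.sin s₀ ∧
    ζ 0 + ζ 1 * Real.cos s₀ - ζ 2 * Real.sin s₀ < 0 ∧ 2 * ζ 0 ^ 2 < ∑ k, ζ k ^ 2}, ?_, ?_, ?_, ?_⟩
  · rw [Set.setOf_and, Set.setOf_and]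
    refine IsOpen.inter (isOpen_lt ?_ ?_) (IsOpen.inter (isOpen_lt ?_ ?_) (isOpen_lt ?_ ?_)) <;>
      fun_prop
  · rintro ζ ⟨h1, h2, h3⟩ c hc
    refine ⟨?_, ?_, ?_⟩
    · simp only [Pi.smul_apply, smul_eq_mul]
      have := mul_pos hc h1
      linarith
    · simp only [Pi.smul_apply, smul_eq_mul]
      have := mul_neg_of_pos_of_neg hc h2
      linarith
    · simp only [Pi.smul_apply, smul_eq_mul, mul_pow, ← Finset.mul_sum]
      have := mul_lt_mul_of_pos_left h3 (pow_pos hc 2)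
      linarith
  · have e2 : ((2 : Fin (m + 3 + 1)) : ℕ) = 2 := rfl
    have e1 : ((1 : Fin (m + 3 + 1)) : ℕ) = 1 := rfl
    have e0 : ((0 : Fin (m + 3 + 1)) : ℕ) = 0 := rfl
    refine ⟨?_, ?_, ?_⟩
    · simp [e2, e1, hsin]
    · simp [e2, e1, hsin]
    · simp only [e0]
      have : (0:ℝ) < ∑ k : Fin (m + 3 + 1), (if (k : ℕ) = 2 then (1 : ℝ) else 0) ^ 2 :=
        Finset.sum_pos' (fun _ _ => sq_nonneg _) ⟨2, Finset.mem_univ _, by simp [e2]⟩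
      simpa using this
  · rintro ζ ⟨h1, h2, h3⟩ i j
    obtain ⟨s, ⟨hsl, hsu⟩, hs⟩ : ∃ s ∈ Set.Icc (-s₀) s₀,
        ζ 0 + ζ 1 * Real.cos s + ζ 2 * Real.sin s = 0 := by
      have hc : ContinuousOn (fun s => ζ 0 + ζ 1 * Real.cos s + ζ 2 * Real.sin s)
        (Set.Icc (-s₀) s₀) := by fun_prop
      have := intermediate_value_Icc (by linarith : -s₀ ≤ s₀) hc
      have := this (show (0:ℝ) ∈ Set.Icc _ _ from ⟨by simp; linarith, h1.le⟩)
      simpa using this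
    refine aux_pointwise (m + 3) hn (fun i j => fourierComp (m + 3) F i j ζ) ?_ ζ ?_ ?_ (θ s) _ ε
      (hunit s) (hball s ?_) ?_ h3 ?_ i j
    · intro i j; simp only [fourierComp, hsym i j]
    · intro j
      have hI : Complex.I * ∑ i, (ζ i : ℂ) * fourierComp (m + 3) F i j ζ = 0 := by
        rw [Finset.mul_sum]
        simp_rw [← mul_assoc, fourierComp, ← aux_fourier_deriv _ _ (hsmooth _ j) (hsupp _ j) ζ]
        rw [← MeasureTheory.integral_finsetSum]
        · simp_rw [← Finset.sum_mul, hdiv]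
          simp
        · intro i _
          apply aux_int
          · exact ((hsmooth i j).continuous_fderiv (by simp)).clm_apply continuous_const
          · exact (hsupp i j).fderiv_apply ℝ _
      simpa using hI
    · simp only [fourierComp]
      rw [← MeasureTheory.integral_finsetSum]
      · simp_rw [← Finset.sum_mul, htrace]
        simp
      · intro i _
        exact aux_int _ _ (hsmooth i i).continuous (hsupp i i) ζ
    · rw [abs_lt]; constructor <;> linarith
    · rw [hsum, hs]
    · intro θ' a1 a2 a3
      exact hslice θ' a1 a2 ζ a3
end

section
/- Let n ≥ 4, α = 1 + 2/(n−1), β = 1 − 2/(n−1). For ξ = (ξ₀,…,ξₙ) ∈ ℝ^{1+n}, define the symmetric (n+1)×(n+1) real matrix P(ξ) by P₀₀ = |ξ|² + α ξ₀², P_{jj} = |ξ|² + β ξⱼ² for 1 ≤ j ≤ n, P₀ⱼ = Pⱼ₀ = ξ₀ξⱼ for 1 ≤ j ≤ n, and P_{jk} = β ξⱼξₖ for 1 ≤ j ≠ k ≤ n, where |ξ| is the Euclidean norm. Then for all ξ, η ∈ ℝ^{1+n}, ηᵀ P(ξ) η ≥ ((n−3)/(n−1)) |ξ|² |η|². In particular,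 P(ξ) is positive definite for every ξ ≠ 0. -/
/-- Strong ellipticity: the symmetrized symbol `P(ξ)` of the operator `A`
arising in the tensor decomposition satisfies
`ηᵀ P(ξ) η ≥ ((n−3)/(n−1)) |ξ|² |η|²`; in particular it is positive definite
for `ξ ≠ 0`. -/
theorem stmt_8 (n : ℕ) (hn : 4 ≤ n)
    (P : (Fin (n + 1) → ℝ) → Fin (n + 1) → Fin (n + 1) → ℝ)
    (hP : ∀ (ξ : Fin (n + 1) → ℝ) (i j : Fin (n + 1)), P ξ i j =
      if i = j then
        (∑ k, ξ k ^ 2) +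
          (if i = 0 then 1 + 2 / ((n : ℝ) - 1) else 1 - 2 / ((n : ℝ) - 1)) * ξ i ^ 2
      else if i = 0 ∨ j = 0 then ξ i * ξ j
      else (1 - 2 / ((n : ℝ) - 1)) * ξ i * ξ j) :
    (∀ ξ η : Fin (n + 1) → ℝ,
      ((n : ℝ) - 3) / ((n : ℝ) - 1) * (∑ k, ξ k ^ 2) * (∑ k, η k ^ 2) ≤
        ∑ i, ∑ j, η i * P ξ i j * η j) ∧
    (∀ ξ : Fin (n + 1) → ℝ, ξ ≠ 0 → ∀ η : Fin (n + 1) → ℝ, η ≠ 0 →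
      0 < ∑ i, ∑ j, η i * P ξ i j * η j) := by
  have hn' : (4 : ℝ) ≤ n := by exact_mod_cast hn
  have hc : 0 < 2 / ((n : ℝ) - 1) := by
    apply div_pos <;> linarith
  have hq : ((n : ℝ) - 3) / ((n : ℝ) - 1) = 1 - 2 / ((n : ℝ) - 1) := by
    have : (n : ℝ) - 1 ≠ 0 := by linarith
    field_simp
    ring
  have hqpos : 0 < ((n : ℝ) - 3) / ((n : ℝ) - 1) := by
    apply div_pos <;> linarith
  have key : ∀ ξ η : Fin (n + 1) → ℝ,
      ((n : ℝ) - 3) / ((n : ℝ) - 1) * (∑ k, ξ k ^ 2) * (∑ k, η k ^ 2) ≤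
        ∑ i, ∑ j, η i * P ξ i j * η j := by
    intro ξ η
    rw [hq]
    generalize 2 / ((n : ℝ) - 1) = c at hc hP
    have h00 : P ξ 0 0 = (∑ k, ξ k ^ 2) + (1 + c) * ξ 0 ^ 2 := by simp [hP]
    have h0s : ∀ j : Fin n, P ξ 0 j.succ = ξ 0 * ξ j.succ := by
      intro j
      rw [hP, if_neg (Fin.succ_ne_zero j).symm]
      simp
    have hs0 : ∀ j : Fin n, P ξ j.succ 0 = ξ 0 * ξ j.succ := by
      intro j
      rw [hP, if_neg (Fin.succ_ne_zero j)]
      simp [mul_comm]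
    have hss : ∀ i j : Fin n, P ξ i.succ j.succ =
        (if i = j then (∑ k, ξ k ^ 2) else 0) + (1 - c) * ξ i.succ * ξ j.succ := by
      intro i j
      rw [hP]
      by_cases h : i = j
      · subst h
        simp [Fin.succ_ne_zero]
        ring
      · simp [h, Fin.succ_ne_zero]
    have hCS := Finset.sum_mul_sq_le_sq_mul_sq Finset.univ
      (fun j : Fin n => ξ j.succ) (fun j : Fin n => η j.succ)
    have hX : ∑ k, ξ k ^ 2 = ξ 0 ^ 2 + ∑ j : Fin n, ξ j.succ ^ 2 := Fin.sum_univ_succ _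
    have hY : ∑ k, η k ^ 2 = η 0 ^ 2 + ∑ j : Fin n, η j.succ ^ 2 := Fin.sum_univ_succ _
    have hX0 : 0 ≤ ∑ j : Fin n, ξ j.succ ^ 2 := Finset.sum_nonneg fun _ _ => sq_nonneg _
    have hY0 : 0 ≤ ∑ j : Fin n, η j.succ ^ 2 := Finset.sum_nonneg fun _ _ => sq_nonneg _
    have hsum : ∑ i, ∑ j, η i * P ξ i j * η j =
        (∑ k, ξ k ^ 2) * (∑ k, η k ^ 2) + (1 + c) * (ξ 0 * η 0) ^ 2
          + 2 * (ξ 0 * η 0) * (∑ j : Fin n, ξ j.succ * η j.succ)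
          + (1 - c) * (∑ j : Fin n, ξ j.succ * η j.succ) ^ 2 := by
      rw [hY]
      generalize (∑ k, ξ k ^ 2) = X at *
      rw [Fin.sum_univ_succ, Fin.sum_univ_succ]
      simp_rw [Fin.sum_univ_succ (n := n)]
      simp only [h00, h0s, hs0, hss]
      have e1 : ∑ j : Fin n, η 0 * (ξ 0 * ξ j.succ) * η j.succ
          = ξ 0 * η 0 * ∑ j : Fin n, ξ j.succ * η j.succ := by
        rw [Finset.mul_sum]
        exact Finset.sum_congr rfl fun _ _ => by ring
      have e2 : ∑ j : Fin n, η j.succ * (ξ 0 * ξ j.succ) * η 0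
          = ξ 0 * η 0 * ∑ j : Fin n, ξ j.succ * η j.succ := by
        rw [Finset.mul_sum]
        exact Finset.sum_congr rfl fun _ _ => by ring
      have e3 : ∑ i : Fin n, ∑ j : Fin n, η i.succ *
            ((if i = j then X else 0) + (1 - c) * ξ i.succ * ξ j.succ) * η j.succ
          = X * ∑ j : Fin n, η j.succ ^ 2
            + (1 - c) * (∑ j : Fin n, ξ j.succ * η j.succ) ^ 2 := by
        rw [sq (∑ j : Fin n, ξ j.succ * η j.succ), Finset.sum_mul_sum, Finset.mul_sum,
          Finset.mul_sum, ← Finset.sum_add_distrib]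
        refine Finset.sum_congr rfl fun i _ => ?_
        have : X * η i.succ ^ 2 = ∑ j : Fin n, if i = j then X * η i.succ * η j.succ else 0 := by
          simp
          ring
        rw [this, Finset.mul_sum, ← Finset.sum_add_distrib]
        refine Finset.sum_congr rfl fun j _ => ?_
        split_ifs <;> ring
      rw [Finset.sum_add_distrib, e1, e2, e3]
      ring
    rw [hsum, hX, hY]
    generalize (∑ j : Fin n, ξ j.succ * η j.succ) = b at *
    generalize (∑ j : Fin n, ξ j.succ ^ 2) = x at *
    generalize (∑ j : Fin n, η j.succ ^ 2) = y at *
    have h1 : 0 ≤ c * (x * y - b ^ 2) := mul_nonneg hc.le (by linarith)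
    have h2 : 0 ≤ c * (ξ 0 ^ 2 * η 0 ^ 2 + ξ 0 ^ 2 * y + x * η 0 ^ 2 + (ξ 0 * η 0) ^ 2) := by
      positivity
    nlinarith [sq_nonneg (ξ 0 * η 0 + b)]
  refine ⟨key, fun ξ hξ η hη => lt_of_lt_of_le ?_ (key ξ η)⟩
  have pos : ∀ v : Fin (n + 1) → ℝ, v ≠ 0 → 0 < ∑ k, v k ^ 2 := by
    intro v hv
    obtain ⟨i, hi⟩ := Function.ne_iff.mp hv
    exact Finset.sum_pos' (fun _ _ => sq_nonneg _) ⟨i, Finset.mem_univ _, by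
      have : v i ≠ 0 := hi
      positivity⟩
  exact mul_pos (mul_pos hqpos (pos ξ hξ)) (pos η hη)
end

section
/- Let n ≥ 4 and let A, B be real numbers with |A| ≤ 1, |B| ≤ 1 and |A + B| ≤ 1. Then (n−1) + (n−3)(A+B)² + 4A(A+B) ≥ n−3. Equivalently, (n−1) + (n+1)A² + 2(n−1)AB + (n−3)B² ≥ n−3. -/
/-- The scalar inequality underlying the strong ellipticity estimate. -/
theorem stmt_9 (n : ℕ) (hn : 4 ≤ n) (A B : ℝ)
    (hA : |A| ≤ 1) (hB : |B| ≤ 1) (hAB : |A + B| ≤ 1) :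
    ((n : ℝ) - 1) + ((n : ℝ) - 3) * (A + B) ^ 2 + 4 * A * (A + B) ≥ (n : ℝ) - 3 ∧
    ((n : ℝ) - 1) + ((n : ℝ) + 1) * A ^ 2 + 2 * ((n : ℝ) - 1) * A * B
      + ((n : ℝ) - 3) * B ^ 2 ≥ (n : ℝ) - 3 := by
  have hn' : (4 : ℝ) ≤ n := by exact_mod_cast hn
  obtain ⟨hB1, hB2⟩ := abs_le.mp hB
  have key : A * (A + B) ≥ -1 / 4 := by
    rcases le_total 0 A with h | h
    · nlinarith [mul_nonneg h (by linarith : (0 : ℝ) ≤ B + 1), sq_nonneg (A - 1 / 2)]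
    · nlinarith [mul_nonneg (neg_nonneg.mpr h) (by linarith : (0 : ℝ) ≤ 1 - B),
        sq_nonneg (A + 1 / 2)]
  have h2 : 0 ≤ ((n : ℝ) - 3) * (A + B) ^ 2 :=
    mul_nonneg (by linarith) (sq_nonneg _)
  constructor
  · linarith
  · linarith
end

section
/- Let n ≥ 4 and let Ω ⊂ ℝ^{1+n} be a bounded domain (connected open set) with smooth boundary. Write α = 1 + 2/(n−1) and β = 1 − 2/(n−1), let Δ denote the full Laplacian Σ_{i=0}^n ∂ᵢ² on ℝ^{1+n}, and let v = (v₀, v₁, …, vₙ) be a vector field whose components are smooth on an open neighborhood of the closure of Ω. If v satisfies Δv₀ + α Σ_{k=0}^n ∂₀∂ₖ vₖ = 0 and Δvⱼ + β Σ_{k=0}^n ∂ⱼ∂ₖ vₖ = 0 for all 1 ≤ j ≤ n on Ω, and v = 0 on ∂Ω, then v ≡ 0 on Ω. -/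
open MeasureTheory Set Filter Topology

theorem auxA {N : ℕ} {Ω : Set (Fin N → ℝ)} (hO : IsOpen Ω) (hb : Bornology.IsBounded Ω)
    (G : (Fin N → ℝ) → ℝ) (hG : ContDiffOn ℝ 1 G Ω)
    (h0 : ∀ z ∈ frontier Ω, ∀ᶠ y in 𝓝 z, G y = 0) (e : Fin N → ℝ) :
    IntegrableOn (fun z => fderiv ℝ G z e) Ω ∧ ∫ z in Ω, fderiv ℝ G z e = 0 := by
  classical
  set F := Ω.indicator G with hF
  have hin : ∀ z ∈ Ω, F =ᶠ[𝓝 z] G := by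
    intro z hz
    filter_upwards [hO.mem_nhds hz] with y hy
    simp [hF, hy]
  have hout : ∀ z ∉ Ω, F =ᶠ[𝓝 z] fun _ => 0 := by
    intro z hz
    by_cases hc : z ∈ closure Ω
    · have : z ∈ frontier Ω := by
        rw [hO.frontier_eq]; exact ⟨hc, hz⟩
      filter_upwards [h0 z this] with y hy
      simp only [hF, indicator]
      split_ifs <;> simp [hy]
    · filter_upwards [isClosed_closure.isOpen_compl.mem_nhds hc] with y hy
      have : y ∉ Ω := fun h => hy (subset_closure h)
      simp [hF, this]
  have hC : ContDiff ℝ 1 F := by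
    rw [contDiff_iff_contDiffAt]
    intro z
    by_cases hz : z ∈ Ω
    · exact (hG.contDiffAt (hO.mem_nhds hz)).congr_of_eventuallyEq (hin z hz)
    · exact contDiffAt_const.congr_of_eventuallyEq (hout z hz)
  have hS : HasCompactSupport F := by
    apply HasCompactSupport.of_support_subset_isCompact hb.isCompact_closure
    exact (Set.support_indicator_subset).trans subset_closure
  have hfd : (fun z => fderiv ℝ F z e) = Ω.indicator (fun z => fderiv ℝ G z e) := by
    funext z
    by_cases hz : z ∈ Ω
    · simp [hz, (hin z hz).fderiv_eq]
    · simp [hz, (hout z hz).fderiv_eq]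
  have hcont : Continuous (fun z => fderiv ℝ F z e) :=
    (hC.continuous_fderiv (by simp)).clm_apply continuous_const
  have hcs : HasCompactSupport (fun z => fderiv ℝ F z e) := hS.fderiv_apply ℝ e
  have hint : Integrable (fun z => fderiv ℝ F z e) := hcont.integrable_of_hasCompactSupport hcs
  have hintF : Integrable F := hC.continuous.integrable_of_hasCompactSupport hS
  have key := integral_mul_fderiv_eq_neg_fderiv_mul_of_integrable (𝕜 := ℝ) (μ := volume)
    (f := fun _ : Fin N → ℝ => (1:ℝ)) (g := F) (v := e) (by simp) (by simpa using hint)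
    (by simpa using hintF) (fun _ _ => by fun_prop)
    (fun x _ => (hC.differentiable (by simp)) x)
  simp only [one_mul] at key
  rw [hfd] at hint key
  refine ⟨(integrable_indicator_iff hO.measurableSet).1 hint, ?_⟩
  rw [integral_indicator hO.measurableSet] at key
  simpa using key

theorem aux_deriv_bound : ∃ B : ℝ, 0 ≤ B ∧ ∀ s : ℝ, 0 ≤ s →
    s * |deriv Real.smoothTransition (s - 1)| ≤ B := by
  have hc : Continuous (deriv Real.smoothTransition) :=
    (Real.smoothTransition.contDiff (n := 1)).continuous_deriv le_rfl
  obtain ⟨B, hB⟩ := (isCompact_Icc (a := (0:ℝ)) (b := 2)).exists_bound_of_continuousOn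
    (f := fun s => s * deriv Real.smoothTransition (s - 1)) (by fun_prop)
  have hB0 : 0 ≤ B := (norm_nonneg _).trans (hB 0 (by simp))
  refine ⟨B, hB0, fun s hs => ?_⟩
  by_cases h : s ≤ 2
  · have := hB s ⟨hs, h⟩
    rwa [Real.norm_eq_abs, abs_mul, abs_of_nonneg hs] at this
  · have : deriv Real.smoothTransition (s - 1) = 0 := by
      have : Real.smoothTransition =ᶠ[𝓝 (s-1)] fun _ => 1 := by
        filter_upwards [lt_mem_nhds (show 1 < s - 1 by linarith)] with y hy
        exact Real.smoothTransition.one_of_one_le hy.le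
      rw [this.deriv_eq]; simp
    simp [this, hB0]

theorem auxB {N : ℕ} {Ω V : Set (Fin N → ℝ)} (hO : IsOpen Ω) (hb : Bornology.IsBounded Ω)
    (hV : IsOpen V) (hΩV : closure Ω ⊆ V)
    (q : (Fin N → ℝ) → ℝ) (hq : ContDiffOn ℝ 1 q V) (hq0 : ∀ z, 0 ≤ q z)
    (hqf : ∀ z ∈ frontier Ω, q z = 0)
    (H : Fin N → (Fin N → ℝ) → ℝ) (hH : ∀ j, ContDiffOn ℝ 1 (H j) V)
    (C : ℝ) (hC : ∀ z ∈ Ω, |∑ j, fderiv ℝ q z (Pi.single j 1) * H j z| ≤ C * q z)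
    (hP : ∀ z ∈ Ω, 0 ≤ ∑ j, fderiv ℝ (H j) z (Pi.single j 1)) :
    ∀ z ∈ Ω, 0 < q z → ∑ j, fderiv ℝ (H j) z (Pi.single j 1) = 0 := by
  classical
  set P : (Fin N → ℝ) → ℝ := fun z => ∑ j, fderiv ℝ (H j) z (Pi.single j 1) with hPdef
  set R : (Fin N → ℝ) → ℝ := fun z => ∑ j, fderiv ℝ q z (Pi.single j 1) * H j z with hRdef
  have hsub : Ω ⊆ V := subset_closure.trans hΩV
  have hPc : ContinuousOn P V := by
    apply continuousOn_finsetSum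
    intro j _
    exact ((hH j).continuousOn_fderiv_of_isOpen hV le_rfl).clm_apply continuousOn_const
  let θ : ℕ → ℝ → ℝ := fun m s => Real.smoothTransition ((m + 1 : ℝ) * s - 1)
  let θ' : ℕ → ℝ → ℝ := fun m s => deriv Real.smoothTransition ((m + 1 : ℝ) * s - 1) * (m + 1)
  have hθC : ∀ m, ContDiff ℝ 1 (θ m) := fun m =>
    (Real.smoothTransition.contDiff (n := 1)).comp (by fun_prop)
  have hθd : ∀ m s, HasDerivAt (θ m) (θ' m s) s := by
    intro m s
    have h1 : HasDerivAt Real.smoothTransition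
        (deriv Real.smoothTransition ((m + 1 : ℝ) * s - 1)) ((m + 1 : ℝ) * s - 1) :=
      ((Real.smoothTransition.contDiff (n := 1)).differentiable (by simp) _).hasDerivAt
    have h2 : HasDerivAt (fun s : ℝ => (m + 1 : ℝ) * s - 1) (m + 1 : ℝ) s := by
      simpa using ((hasDerivAt_id s).const_mul (m + 1 : ℝ)).sub_const 1
    exact h1.comp s h2
  have hGC : ∀ m j, ContDiffOn ℝ 1 (fun z => θ m (q z) * H j z) V := fun m j =>
    ((hθC m).comp_contDiffOn hq).mul (hH j)
  have hGd : ∀ m j, ∀ z ∈ Ω, ∀ e, fderiv ℝ (fun z => θ m (q z) * H j z) z e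
      = θ m (q z) * fderiv ℝ (H j) z e + θ' m (q z) * (fderiv ℝ q z e * H j z) := by
    intro m j z hz e
    have hzV : V ∈ 𝓝 z := hV.mem_nhds (hsub hz)
    have h1 : HasFDerivAt q (fderiv ℝ q z) z :=
      ((hq.contDiffAt hzV).differentiableAt (by simp)).hasFDerivAt
    have h2 : HasFDerivAt (H j) (fderiv ℝ (H j) z) z :=
      (((hH j).contDiffAt hzV).differentiableAt (by simp)).hasFDerivAt
    have h3 := ((hθd m (q z)).comp_hasFDerivAt z h1).mul h2
    have h4 := h3.fderiv
    change fderiv ℝ (fun z => θ m (q z) * H j z) z = _ at h4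
    rw [h4]
    simp
    ring
  have hI : ∀ m, ∫ z in Ω, (θ m (q z) * P z + θ' m (q z) * R z) = 0 := by
    intro m
    have hA := fun j => auxA hO hb (fun z => θ m (q z) * H j z) ((hGC m j).mono hsub) (by
      intro z hz
      have hzV : V ∈ 𝓝 z := hV.mem_nhds (hΩV (frontier_subset_closure hz))
      have hc : ContinuousAt q z := hq.continuousOn.continuousAt hzV
      have hpos : q z < 1 / (m + 1 : ℝ) := by rw [hqf z hz]; positivity
      filter_upwards [hc.eventually_lt continuousAt_const hpos] with y hy
      have : θ m (q y) = 0 := by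
        apply Real.smoothTransition.zero_of_nonpos
        rw [lt_div_iff₀ (by positivity)] at hy
        linarith
      simp [this]) (Pi.single j 1)
    have h1 : ∫ z in Ω, (∑ j, fderiv ℝ (fun z => θ m (q z) * H j z) z (Pi.single j 1)) = 0 := by
      rw [integral_finsetSum _ (fun j _ => (hA j).1)]
      exact Finset.sum_eq_zero fun j _ => (hA j).2
    rw [← h1]
    apply setIntegral_congr_fun hO.measurableSet
    intro z hz
    simp only [hGd m _ z hz, hPdef, hRdef, Finset.sum_add_distrib, Finset.mul_sum]
  obtain ⟨B, hB0, hB⟩ := aux_deriv_bound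
  obtain ⟨M, hM⟩ := hb.isCompact_closure.exists_bound_of_continuousOn (hPc.mono hΩV)
  have hqc : ContinuousOn q Ω := hq.continuousOn.mono hsub
  have hRc : ContinuousOn R Ω := by
    apply continuousOn_finsetSum
    intro j _
    exact (((hq.continuousOn_fderiv_of_isOpen hV le_rfl).clm_apply continuousOn_const).mul
      (hH j).continuousOn).mono hsub
  have hσ'c : Continuous (deriv Real.smoothTransition) :=
    (Real.smoothTransition.contDiff (n := 1)).continuous_deriv le_rfl
  have hθ'c : ∀ m, Continuous (θ' m) := fun m => by
    simp only [θ']; fun_prop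
  have hlim := tendsto_integral_of_dominated_convergence (μ := volume.restrict Ω)
    (F := fun m z => θ m (q z) * P z + θ' m (q z) * R z)
    (f := fun z => if 0 < q z then P z else 0) (fun _ => M + |C| * B)
    (by
      intro m
      apply ContinuousOn.aestronglyMeasurable _ hO.measurableSet
      exact (((hθC m).continuous.comp_continuousOn hqc).mul (hPc.mono hsub)).add
        (((hθ'c m).comp_continuousOn hqc).mul hRc))
    (by
      have : volume Ω < ⊤ := hb.measure_lt_top
      exact integrableOn_const this.ne)
    (by
      intro m
      filter_upwards [ae_restrict_mem hO.measurableSet] with z hz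
      refine (norm_add_le _ _).trans (add_le_add ?_ ?_)
      · rw [norm_mul]
        have h1 : ‖θ m (q z)‖ ≤ 1 := by
          rw [Real.norm_eq_abs, abs_of_nonneg (Real.smoothTransition.nonneg _)]
          exact Real.smoothTransition.le_one _
        have h2 := hM z (subset_closure hz)
        nlinarith [norm_nonneg (P z)]
      · rw [norm_mul, Real.norm_eq_abs, Real.norm_eq_abs]
        have h1 : |R z| ≤ |C| * q z :=
          (hC z hz).trans (mul_le_mul_of_nonneg_right (le_abs_self C) (hq0 z))
        have h2 := hB ((m + 1 : ℝ) * q z) (mul_nonneg (by positivity) (hq0 z))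
        have h3 : |θ' m (q z)| = |deriv Real.smoothTransition ((m + 1 : ℝ) * q z - 1)| * (m + 1) := by
          simp only [θ']
          rw [abs_mul, abs_of_nonneg (show (0:ℝ) ≤ m + 1 by positivity)]
        calc |θ' m (q z)| * |R z| ≤ |θ' m (q z)| * (|C| * q z) :=
              mul_le_mul_of_nonneg_left h1 (abs_nonneg _)
          _ = |C| * ((m + 1 : ℝ) * q z * |deriv Real.smoothTransition ((m + 1 : ℝ) * q z - 1)|) := by
              rw [h3]; ring
          _ ≤ |C| * B := mul_le_mul_of_nonneg_left h2 (abs_nonneg _))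
    (by
      filter_upwards [ae_restrict_mem hO.measurableSet] with z hz
      by_cases hz0 : 0 < q z
      · simp only [hz0, if_true]
        apply tendsto_const_nhds.congr'
        obtain ⟨m0, hm0⟩ := exists_nat_gt (2 / q z)
        filter_upwards [eventually_ge_atTop m0] with m hm
        have hm' : (m0 : ℝ) ≤ m := by exact_mod_cast hm
        have h2 : 1 < (m + 1 : ℝ) * q z - 1 := by
          rw [div_lt_iff₀ hz0] at hm0
          nlinarith
        have h3 : θ m (q z) = 1 := Real.smoothTransition.one_of_one_le h2.le
        have h4 : θ' m (q z) = 0 := by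
          have : Real.smoothTransition =ᶠ[𝓝 ((m + 1 : ℝ) * q z - 1)] fun _ => 1 := by
            filter_upwards [lt_mem_nhds h2] with y hy
            exact Real.smoothTransition.one_of_one_le hy.le
          simp only [θ']
          rw [this.deriv_eq]; simp
        rw [h3, h4]; ring
      · have hz1 : q z = 0 := le_antisymm (not_lt.1 hz0) (hq0 z)
        have hR0 : R z = 0 := by
          have := hC z hz
          rw [hz1, mul_zero] at this
          exact abs_nonpos_iff.1 this
        simp only [hz0, if_false]
        apply tendsto_const_nhds.congr
        intro m
        have : θ m (q z) = 0 := by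
          apply Real.smoothTransition.zero_of_nonpos
          rw [hz1]; norm_num
        rw [this, hR0]; ring)
  simp only [hI] at hlim
  have hzero := (tendsto_nhds_unique hlim tendsto_const_nhds)
  set U := Ω ∩ {z | 0 < q z} with hU
  have hUo : IsOpen U := hqc.isOpen_inter_preimage hO isOpen_Ioi
  have hfun : (fun z => if 0 < q z then P z else 0) = {z | 0 < q z}.indicator P := by
    funext z; simp [indicator]
  have hUI : ∫ z in U, P z = 0 := by
    rw [← hzero, ← integral_indicator hUo.measurableSet, ← integral_indicator hO.measurableSet,
      hfun, indicator_indicator]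
  have hPi : IntegrableOn P U := by
    have : IntegrableOn P (closure Ω) :=
      (hPc.mono hΩV).integrableOn_compact hb.isCompact_closure
    exact this.mono_set (inter_subset_left.trans subset_closure)
  have hae := (setIntegral_eq_zero_iff_of_nonneg_ae (by
    filter_upwards [ae_restrict_mem hUo.measurableSet] with z hz
    exact hP z hz.1) hPi).1 hUI
  have := Measure.eqOn_open_of_ae_eq hae hUo (hPc.mono (inter_subset_left.trans hsub))
    continuousOn_const
  intro z hz hzq
  exact this ⟨hz, hzq⟩

/-- Uniqueness for the homogeneous Dirichlet problem for the elliptic system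
`A(t,x;∇)v = 0` arising in the tensor decomposition (`n ≥ 4`):
`Δv₀ + α Σₖ ∂₀∂ₖvₖ = 0`, `Δvⱼ + β Σₖ ∂ⱼ∂ₖvₖ = 0` (`1 ≤ j ≤ n`) on `Ω`,
with `v = 0` on `∂Ω`, imply `v ≡ 0` on `Ω`. Here `α = 1 + 2/(n−1)`,
`β = 1 − 2/(n−1)` and `Δ = Σᵢ ∂ᵢ²` is the full Laplacian on `ℝ^{1+n}`. -/
theorem stmt_11 (n : ℕ) (hn : 4 ≤ n) (Ω : Set (Fin (n + 1) → ℝ))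
    (hΩopen : IsOpen Ω) (hΩconn : IsConnected Ω)
    (hΩbdd : Bornology.IsBounded Ω)
    (v : Fin (n + 1) → (Fin (n + 1) → ℝ) → ℝ)
    (hv : ∃ V : Set (Fin (n + 1) → ℝ), IsOpen V ∧ closure Ω ⊆ V ∧
      ∀ i, ContDiffOn ℝ (⊤ : ℕ∞) (v i) V)
    (heq0 : ∀ z ∈ Ω,
      (∑ i, fderiv ℝ (fun y => fderiv ℝ (v 0) y (Pi.single i 1)) z (Pi.single i 1))
        + (1 + 2 / ((n : ℝ) - 1)) *
          (∑ k, fderiv ℝ (fun y => fderiv ℝ (v k) y (Pi.single k 1)) z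
            (Pi.single 0 1)) = 0)
    (heqj : ∀ j : Fin (n + 1), j ≠ 0 → ∀ z ∈ Ω,
      (∑ i, fderiv ℝ (fun y => fderiv ℝ (v j) y (Pi.single i 1)) z (Pi.single i 1))
        + (1 - 2 / ((n : ℝ) - 1)) *
          (∑ k, fderiv ℝ (fun y => fderiv ℝ (v k) y (Pi.single k 1)) z
            (Pi.single j 1)) = 0)
    (hbd : ∀ i : Fin (n + 1), ∀ z ∈ frontier Ω, v i z = 0) :
    ∀ i : Fin (n + 1), ∀ z ∈ Ω, v i z = 0 := by
  classical
  obtain ⟨V, hV, hΩV, hvV⟩ := hv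
  have hsub : Ω ⊆ V := subset_closure.trans hΩV
  have hn' : (4 : ℝ) ≤ n := by exact_mod_cast hn
  set α : ℝ := 1 + 2 / ((n : ℝ) - 1) with hα
  set β : ℝ := 1 - 2 / ((n : ℝ) - 1) with hβ
  have hαpos : 0 < α := by
    have : 0 < 2 / ((n : ℝ) - 1) := div_pos two_pos (by linarith)
    linarith
  have hβpos : 0 < β := by
    have : 2 / ((n : ℝ) - 1) < 1 := by rw [div_lt_one (by linarith)]; linarith
    linarith
  let c : Fin (n + 1) → ℝ := fun i => if i = 0 then β else α
  have hc : ∀ i, 0 < c i := by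
    intro i; simp only [c]; split_ifs <;> assumption
  let dv : Fin (n + 1) → Fin (n + 1) → (Fin (n + 1) → ℝ) → ℝ :=
    fun i j y => fderiv ℝ (v i) y (Pi.single j 1)
  let L : Fin (n + 1) → Fin (n + 1) → Fin (n + 1) → (Fin (n + 1) → ℝ) → ℝ :=
    fun i j k z => fderiv ℝ (dv i j) z (Pi.single k 1)
  have hdvC : ∀ i j, ContDiffOn ℝ 1 (dv i j) V := fun i j =>
    ((hvV i).fderiv_of_isOpen hV (m := 1) (by
      rw [one_add_one_eq_two]; exact WithTop.coe_le_coe.2 (le_top : (2 : ℕ∞) ≤ ⊤))).clm_apply contDiffOn_const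
  have hv1 : ∀ i, ContDiffOn ℝ 1 (v i) V := fun i => (hvV i).of_le (by exact_mod_cast le_top)
  have heq : ∀ i, ∀ z ∈ Ω, c i * (∑ j, L i j j z) = - (α * β * ∑ k, L k k i z) := by
    intro i z hz
    by_cases hi : i = 0
    · subst hi
      have := heq0 z hz
      change (∑ j, L 0 j j z) + α * (∑ k, L k k 0 z) = 0 at this
      simp only [c, if_true]
      linear_combination β * this
    · have := heqj i hi z hz
      change (∑ j, L i j j z) + β * (∑ k, L k k i z) = 0 at this
      simp only [c, hi, if_false]
      linear_combination α * this
  let q : (Fin (n + 1) → ℝ) → ℝ := fun z => ∑ i, v i z ^ 2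
  let D : (Fin (n + 1) → ℝ) → ℝ := fun z => ∑ k, dv k k z
  let H : Fin (n + 1) → (Fin (n + 1) → ℝ) → ℝ := fun j z =>
    ∑ i, c i * (v i z * dv i j z) + α * β * (v j z * D z)
  have hqC : ContDiffOn ℝ 1 q V := ContDiffOn.sum fun i _ => (hv1 i).pow 2
  have hDC : ContDiffOn ℝ 1 D V := ContDiffOn.sum fun i _ => hdvC i i
  have hHC : ∀ j, ContDiffOn ℝ 1 (H j) V := fun j =>
    (ContDiffOn.sum fun i _ => contDiffOn_const.mul ((hv1 i).mul (hdvC i j))).add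
      (contDiffOn_const.mul ((hv1 j).mul hDC))
  have hvd : ∀ i, ∀ z ∈ V, HasFDerivAt (v i) (fderiv ℝ (v i) z) z := fun i z hz =>
    (((hv1 i).contDiffAt (hV.mem_nhds hz)).differentiableAt (by simp)).hasFDerivAt
  have hdvd : ∀ i j, ∀ z ∈ V, HasFDerivAt (dv i j) (fderiv ℝ (dv i j) z) z := fun i j z hz =>
    (((hdvC i j).contDiffAt (hV.mem_nhds hz)).differentiableAt (by simp)).hasFDerivAt
  have hqd : ∀ z ∈ V, ∀ e, fderiv ℝ q z e = ∑ i, 2 * v i z * fderiv ℝ (v i) z e := by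
    intro z hz e
    have h := HasFDerivAt.fun_sum (u := Finset.univ) fun i _ => (hvd i z hz).pow 2
    change fderiv ℝ (fun z => ∑ i, v i z ^ 2) z e = _
    rw [h.fderiv]
    simp
  have hDd : ∀ z ∈ V, HasFDerivAt D (∑ k, fderiv ℝ (dv k k) z) z := fun z hz =>
    HasFDerivAt.fun_sum (u := Finset.univ) fun k _ => hdvd k k z hz
  have hHd : ∀ j, ∀ z ∈ V, fderiv ℝ (H j) z (Pi.single j 1) =
      ∑ i, c i * (v i z * L i j j z + dv i j z * dv i j z)
        + α * β * (v j z * (∑ k, L k k j z) + D z * dv j j z) := by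
    intro j z hz
    have h := (HasFDerivAt.fun_sum (u := Finset.univ) fun i _ =>
      ((hvd i z hz).mul (hdvd i j z hz)).const_mul (c i)).add
        (((hvd j z hz).mul (hDd z hz)).const_mul (α * β))
    have h' := h.fderiv
    change fderiv ℝ (H j) z = _ at h'
    rw [h']
    simp [L, dv, mul_add]
  have hPeq : ∀ z ∈ Ω, ∑ j, fderiv ℝ (H j) z (Pi.single j 1) =
      (∑ j, ∑ i, c i * dv i j z ^ 2) + α * β * D z ^ 2 := by
    intro z hz
    have h1 : ∑ j, ∑ i, c i * (v i z * L i j j z) = - ∑ i, α * β * (v i z * ∑ k, L k k i z) := by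
      rw [Finset.sum_comm, ← Finset.sum_neg_distrib]
      refine Finset.sum_congr rfl fun i _ => ?_
      have : ∑ j, c i * (v i z * L i j j z) = v i z * (c i * ∑ j, L i j j z) := by
        simp only [Finset.mul_sum]
        exact Finset.sum_congr rfl fun j _ => by ring
      rw [this, heq i z hz]; ring
    have h2 : ∑ j, α * β * (D z * dv j j z) = α * β * D z ^ 2 := by
      rw [← Finset.mul_sum, ← Finset.mul_sum]
      change α * β * (D z * D z) = _
      ring
    rw [Finset.sum_congr rfl fun j _ => hHd j z (hsub hz)]
    simp only [mul_add, Finset.sum_add_distrib]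
    rw [h1, h2]
    simp only [sq]
    ring
  have hPnn : ∀ z ∈ Ω, 0 ≤ ∑ j, fderiv ℝ (H j) z (Pi.single j 1) := by
    intro z hz
    rw [hPeq z hz]
    exact add_nonneg (Finset.sum_nonneg fun j _ => Finset.sum_nonneg fun i _ =>
      mul_nonneg (hc i).le (sq_nonneg _)) (mul_nonneg (mul_pos hαpos hβpos).le (sq_nonneg _))
  -- coefficient functions of `H`
  let a : Fin (n + 1) → Fin (n + 1) → (Fin (n + 1) → ℝ) → ℝ := fun i j z =>
    c i * dv i j z + α * β * (if i = j then D z else 0)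
  have hHa : ∀ j z, H j z = ∑ i, v i z * a i j z := by
    intro j z
    simp only [H, a, mul_add, Finset.sum_add_distrib]
    congr 1
    · exact Finset.sum_congr rfl fun i _ => by ring
    · simp
      ring
  have haC : ∀ i j, ContinuousOn (a i j) V := by
    intro i j
    refine (continuousOn_const.mul (hdvC i j).continuousOn).add (continuousOn_const.mul ?_)
    split_ifs
    · exact hDC.continuousOn
    · exact continuousOn_const
  have hK := hΩbdd.isCompact_closure
  choose A hA using fun i j => hK.exists_bound_of_continuousOn ((haC i j).mono hΩV)
  choose E hE using fun i j => hK.exists_bound_of_continuousOn ((hdvC i j).continuousOn.mono hΩV)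
  let S : (Fin (n + 1) → ℝ) → ℝ := fun z => ∑ i, |v i z|
  have hlin : ∀ (b : Fin (n + 1) → ℝ) (B : Fin (n + 1) → ℝ) (z), (∀ i, |b i| ≤ B i) →
      |∑ i, v i z * b i| ≤ S z * ∑ i, B i := by
    intro b B z h
    refine (Finset.abs_sum_le_sum_abs _ _).trans ?_
    rw [Finset.sum_mul]
    refine Finset.sum_le_sum fun i _ => ?_
    rw [abs_mul]
    refine mul_le_mul_of_nonneg_left ((h i).trans ?_) (abs_nonneg _)
    exact Finset.single_le_sum (fun k _ => (abs_nonneg _).trans (h k)) (Finset.mem_univ i)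
  have hSq : ∀ z, S z ^ 2 ≤ (n + 1 : ℝ) * q z := by
    intro z
    have := sq_sum_le_card_mul_sum_sq (s := Finset.univ) (f := fun i => |v i z|)
    simpa [S, q] using this
  have hS0 : ∀ z, 0 ≤ S z := fun z => Finset.sum_nonneg fun i _ => abs_nonneg _
  have hq0 : ∀ z, 0 ≤ q z := fun z => Finset.sum_nonneg fun i _ => sq_nonneg _
  have hR : ∀ z ∈ Ω, |∑ j, fderiv ℝ q z (Pi.single j 1) * H j z| ≤
      ((∑ j, 2 * (∑ i, E i j) * (∑ i, A i j)) * (n + 1)) * q z := by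
    intro z hz
    have hzc := subset_closure hz
    have hA0 : ∀ i j, 0 ≤ A i j := fun i j => (norm_nonneg _).trans (hA i j z hzc)
    have hE0 : ∀ i j, 0 ≤ E i j := fun i j => (norm_nonneg _).trans (hE i j z hzc)
    have hcoef : 0 ≤ ∑ j, 2 * (∑ i, E i j) * (∑ i, A i j) :=
      Finset.sum_nonneg fun j _ => mul_nonneg (mul_nonneg two_pos.le
        (Finset.sum_nonneg fun i _ => hE0 i j)) (Finset.sum_nonneg fun i _ => hA0 i j)
    calc |∑ j, fderiv ℝ q z (Pi.single j 1) * H j z|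
        ≤ ∑ j, (2 * (∑ i, E i j) * (∑ i, A i j)) * S z ^ 2 := by
          refine (Finset.abs_sum_le_sum_abs _ _).trans (Finset.sum_le_sum fun j _ => ?_)
          have e1 : fderiv ℝ q z (Pi.single j 1) = 2 * ∑ i, v i z * dv i j z := by
            rw [hqd z (hsub hz), Finset.mul_sum]
            exact Finset.sum_congr rfl fun i _ => by simp only [dv]; ring
          have b1 := hlin (fun i => dv i j z) (fun i => E i j) z (fun i => hE i j z hzc)
          have b2 := hlin (fun i => a i j z) (fun i => A i j) z (fun i => hA i j z hzc)
          rw [e1, hHa, abs_mul, abs_mul, abs_two]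
          have := mul_le_mul b1 b2 (abs_nonneg _)
            (mul_nonneg (hS0 z) (Finset.sum_nonneg fun i _ => hE0 i j))
          linarith
      _ = (∑ j, 2 * (∑ i, E i j) * (∑ i, A i j)) * S z ^ 2 := by rw [Finset.sum_mul]
      _ ≤ (∑ j, 2 * (∑ i, E i j) * (∑ i, A i j)) * ((n + 1 : ℝ) * q z) :=
          mul_le_mul_of_nonneg_left (hSq z) hcoef
      _ = _ := by ring
  have hqf : ∀ z ∈ frontier Ω, q z = 0 := fun z hz =>
    Finset.sum_eq_zero fun i _ => by rw [hbd i z hz]; norm_num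
  have hfin := auxB hΩopen hΩbdd hV hΩV q hqC hq0 hqf H hHC _ hR hPnn
  have hsingle : ∀ (f : (Fin (n + 1) → ℝ) →L[ℝ] ℝ), (∀ j, f (Pi.single j 1) = 0) → f = 0 := by
    intro f hf
    apply ContinuousLinearMap.coe_injective
    apply LinearMap.pi_ext'
    intro j
    ext
    simp [hf]
  have hgrad : Ω.EqOn (fderiv ℝ q) 0 := by
    intro z hz
    apply hsingle
    intro j
    rw [hqd z (hsub hz)]
    refine Finset.sum_eq_zero fun i _ => ?_
    by_cases hqz : 0 < q z
    · have h := hfin z hz hqz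
      rw [hPeq z hz] at h
      have hnn : ∀ j ∈ Finset.univ, 0 ≤ ∑ i, c i * dv i j z ^ 2 := fun j _ =>
        Finset.sum_nonneg fun i _ => mul_nonneg (hc i).le (sq_nonneg _)
      have h1 : ∑ j, ∑ i, c i * dv i j z ^ 2 = 0 := by
        have h2 := Finset.sum_nonneg hnn
        have h3 := mul_nonneg (mul_pos hαpos hβpos).le (sq_nonneg (D z))
        linarith
      have h2 := (Finset.sum_eq_zero_iff_of_nonneg hnn).1 h1 j (Finset.mem_univ j)
      have h3 := (Finset.sum_eq_zero_iff_of_nonneg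
        (fun i _ => mul_nonneg (hc i).le (sq_nonneg _))).1 h2 i (Finset.mem_univ i)
      have h4 : dv i j z = 0 := by
        rcases mul_eq_zero.1 h3 with h | h
        · exact absurd h (hc i).ne'
        · exact pow_eq_zero_iff two_ne_zero |>.1 h
      change 2 * v i z * dv i j z = 0
      rw [h4, mul_zero]
    · have hqz0 : q z = 0 := le_antisymm (not_lt.1 hqz) (hq0 z)
      have := (Finset.sum_eq_zero_iff_of_nonneg (fun i _ => sq_nonneg (v i z))).1 hqz0 i
        (Finset.mem_univ i)
      rw [pow_eq_zero_iff two_ne_zero |>.1 this]; ring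
  obtain ⟨r, hr⟩ := hΩopen.exists_is_const_of_fderiv_eq_zero hΩconn.isPreconnected
    ((hqC.mono hsub).differentiableOn (by simp)) hgrad
  have hne : (frontier Ω).Nonempty := by
    rw [nonempty_frontier_iff]
    refine ⟨hΩconn.nonempty, fun h => ?_⟩
    rw [h] at hΩbdd
    exact NormedSpace.unbounded_univ ℝ (Fin (n + 1) → ℝ) hΩbdd
  obtain ⟨w, hw⟩ := hne
  have hwc := frontier_subset_closure hw
  have hr0 : r = 0 := by
    have : Set.EqOn q (fun _ => r) (closure Ω) :=
      Set.EqOn.of_subset_closure (s := Ω) (fun z hz => hr z hz) (hqC.continuousOn.mono hΩV)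
        continuousOn_const subset_closure subset_rfl
    rw [← hqf w hw]
    exact (this hwc).symm
  intro i z hz
  have hqz0 : ∑ i, v i z ^ 2 = 0 := (hr z hz).trans hr0
  have := (Finset.sum_eq_zero_iff_of_nonneg (fun i _ => sq_nonneg (v i z))).1 hqz0 i
    (Finset.mem_univ i)
  exact pow_eq_zero_iff two_ne_zero |>.1 this
end

section
/- Let n ≥ 4 and let Ω ⊂ ℝ^{1+n} be a bounded domain (connected open set) with smooth boundary. Write α = 1 + 2/(n−1) and β = 1 − 2/(n−1), let Δ denote the full Laplacian Σ_{i=0}^n ∂ᵢ² on ℝ^{1+n}, and let w = (w₀, w₁, …, wₙ) be a vector field whose components are smooth on an open neighborhood of the closure of Ω. If w satisfies Δw₀ + (α−β) ∂₀² w₀ + β Σ_{k=0}^n ∂ₖ∂₀ wₖ = 0 and Δwⱼ + (α−β) ∂₀∂ⱼ w₀ + β Σ_{k=0}^n ∂ₖ∂ⱼ wₖ = 0 for all 1 ≤ j ≤ n on Ω, and w = 0 on ∂Ω, then w ≡ 0 on Ω. -/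
open MeasureTheory Set Topology
open scoped ContDiff NNReal

theorem aux_fderiv_zero_ae {m : ℕ} {g : (Fin (m+1) → ℝ) → ℝ} {s : Set (Fin (m+1) → ℝ)}
    (hs : MeasurableSet s) (hg : ∀ x ∈ s, g x = 0) :
    ∀ᵐ x, x ∈ s → DifferentiableAt ℝ g x → fderiv ℝ g x = 0 := by
  let e : Fin (m+1) → ℝ := fun _ => 1
  have key : ∀ u : Set (Fin (m+1) → ℝ), MeasurableSet u → (∀ x ∈ u, g x = 0) →
      (∀ x ∈ u, DifferentiableAt ℝ g x) → ∀ᵐ x ∂(volume.restrict u), fderiv ℝ g x = 0 := by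
    intro u hu h0 hd
    have h := ApproximatesLinearOn.norm_fderiv_sub_le (f := fun x => g x • e) (s := u)
      (A := 0) (δ := 0) volume (by
        intro x hx y hy
        simp [h0 x hx, h0 y hy]) hu (fun x => (fderiv ℝ g x).smulRight e)
        (fun x hx => ((hd x hx).hasFDerivAt.smul_const e).hasFDerivWithinAt)
    filter_upwards [h] with x hx
    have h1 : fderiv ℝ g x = 0 ∨ e = 0 := by simpa using hx
    refine h1.resolve_right fun h => ?_
    simpa [e] using congrFun h 0
  have hm : MeasurableSet (s ∩ {x | DifferentiableAt ℝ g x}) :=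
    hs.inter (measurableSet_of_differentiableAt ℝ g)
  have := key _ hm (fun x hx => hg x hx.1) (fun x hx => hx.2)
  rw [ae_restrict_iff' hm] at this
  filter_upwards [this] with x hx h1 h2 using hx ⟨h1, h2⟩

theorem aux_lip {E : Type*} [NormedAddCommGroup E] [NormedSpace ℝ E] {F : E → ℝ} {C : ℝ≥0}
    (hF : LipschitzWith C F) {Ω : Set E} (hb : ∀ x ∈ frontier Ω, F x = 0) :
    LipschitzWith C (Ω.indicator F) := by
  have main : ∀ x ∈ Ω, ∀ y ∉ Ω, |F x| ≤ C * dist x y := by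
    intro x hx y hy
    obtain ⟨z, hz, hzf⟩ : (segment ℝ x y ∩ frontier Ω).Nonempty := by
      by_contra hne
      have hc : IsPreconnected (segment ℝ x y) := (convex_segment x y).isPreconnected
      have hnf : ∀ p ∈ segment ℝ x y, p ∈ closure Ω → p ∈ interior Ω := by
        intro p hp hp1
        by_contra hp2
        exact hne ⟨p, hp, hp1, hp2⟩
      obtain ⟨p, -, hp1, hp2⟩ := hc (interior Ω) (closure Ω)ᶜ isOpen_interior
        isClosed_closure.isOpen_compl
        (fun p hp => by
          by_cases h : p ∈ closure Ω
          · exact Or.inl (hnf p hp h)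
          · exact Or.inr h)
        ⟨x, left_mem_segment ℝ x y, hnf x (left_mem_segment ℝ x y) (subset_closure hx)⟩
        ⟨y, right_mem_segment ℝ x y, fun h =>
          hy (interior_subset (hnf y (right_mem_segment ℝ x y) h))⟩
      exact hp2 (subset_closure (interior_subset hp1))
    have h1 := hF.dist_le_mul x z
    rw [hb z hzf, Real.dist_eq, sub_zero] at h1
    have h2 : dist x z ≤ dist x y := by
      have := dist_add_dist_of_mem_segment hz
      linarith [dist_nonneg (x := z) (y := y)]
    exact h1.trans (by gcongr)
  refine LipschitzWith.of_dist_le_mul fun x y => ?_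
  by_cases hx : x ∈ Ω <;> by_cases hy : y ∈ Ω
  · simpa [hx, hy] using hF.dist_le_mul x y
  · simpa [hx, hy, Real.dist_eq] using main x hx y hy
  · simpa [hx, hy, Real.dist_eq, dist_comm] using main y hy x hx
  · simp [hx, hy]; positivity

theorem aux_div {m : ℕ} {F : (Fin (m+1) → ℝ) → ℝ} (hF : ContDiff ℝ 1 F)
    (hc : HasCompactSupport F) {Ω : Set (Fin (m+1) → ℝ)} (hΩ : IsOpen Ω)
    (hb : ∀ x ∈ frontier Ω, F x = 0) (v : Fin (m+1) → ℝ) :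
    ∫ x in Ω, fderiv ℝ F x v = 0 := by
  obtain ⟨C, hL⟩ := ContDiff.lipschitzWith_of_hasCompactSupport hc hF (by simp)
  have hG := aux_lip hL hb
  set G := Ω.indicator F with hGdef
  have hGc : HasCompactSupport G := hc.mono (by simp [hGdef])
  have h1 := LipschitzWith.integral_lineDeriv_mul_eq (μ := volume)
    (LipschitzWith.const (α := Fin (m+1) → ℝ) (1:ℝ)) hG hGc (-v)
  have h2 : ∀ x : Fin (m+1) → ℝ, lineDeriv ℝ (fun _ : Fin (m+1) → ℝ => (1:ℝ)) x (-v) = 0 := by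
    intro x; simp [lineDeriv]
  simp only [h2, zero_mul, integral_zero, neg_neg, mul_one] at h1
  rw [← integral_indicator hΩ.measurableSet, h1]
  apply integral_congr_ae
  filter_upwards [hG.ae_differentiableAt (μ := volume), aux_fderiv_zero_ae (g := G) (s := Ωᶜ)
    hΩ.measurableSet.compl (fun x hx => by simp [hGdef, show x ∉ Ω from hx])] with x hx h0
  rw [hx.lineDeriv_eq_fderiv]
  by_cases hxΩ : x ∈ Ω
  · have : G =ᶠ[𝓝 x] F := by
      filter_upwards [hΩ.mem_nhds hxΩ] with y hy
      simp [hGdef, hy]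
    simp [hxΩ, this.fderiv_eq]
  · simp [hxΩ, h0 hxΩ hx]

theorem aux_quad (n : ℕ) (hn : 4 ≤ n) (A : Fin (n+1) → Fin (n+1) → ℝ) :
    0 ≤ ∑ i, ∑ j, A i j ^ 2 + (4 / ((n:ℝ) - 1) * A 0 0 + (1 - 2 / ((n : ℝ) - 1)) * ∑ k, A k k)
      * ∑ k, A k k ∧
    (∑ i, ∑ j, A i j ^ 2 + (4 / ((n:ℝ) - 1) * A 0 0 + (1 - 2 / ((n : ℝ) - 1)) * ∑ k, A k k)
      * ∑ k, A k k = 0 → ∀ i j, A i j = 0) := by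
  have hN : (4:ℝ) ≤ n := by exact_mod_cast hn
  have h1 : ∑ k, A k k ^ 2 ≤ ∑ i, ∑ j, A i j ^ 2 := by
    refine Finset.sum_le_sum fun i _ => ?_
    exact Finset.single_le_sum (f := fun j => A i j ^ 2) (fun j _ => sq_nonneg _) (Finset.mem_univ i)
  have h2 : (∑ k : Fin n, A k.succ k.succ) ^ 2 ≤ n * ∑ k : Fin n, A k.succ k.succ ^ 2 := by
    simpa using sq_sum_le_card_mul_sum_sq (s := Finset.univ) (f := fun k : Fin n => A k.succ k.succ)
  have hD : ∑ k, A k k = A 0 0 + ∑ k : Fin n, A k.succ k.succ := Fin.sum_univ_succ _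
  rw [Fin.sum_univ_succ] at h1
  set D := ∑ k, A k k with hDd
  set a := A 0 0
  set T := ∑ i, ∑ j, A i j ^ 2 with hT
  have hb : ∑ k : Fin n, A k.succ k.succ = D - a := by linarith
  rw [hb] at h2
  have h3 : a ^ 2 + (D - a) ^ 2 / n ≤ T := by
    have : (D - a) ^ 2 / n ≤ ∑ k : Fin n, A k.succ k.succ ^ 2 := by
      rw [div_le_iff₀ (by linarith)]; linarith
    linarith
  have h4 : a ^ 2 + (D - a) ^ 2 / n + (4 / ((n:ℝ) - 1) * a + (1 - 2 / ((n : ℝ) - 1)) * D) * D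
      = ((n+1) * (a + D)^2 + (n+1) * (n-2) * a^2 + ((n:ℝ)^2 - 3 * n - 2) * D^2)
        / (n * ((n:ℝ) - 1)) := by
    have : (n:ℝ) - 1 ≠ 0 := by linarith
    have : (n:ℝ) ≠ 0 := by linarith
    field_simp
    ring
  have hc1 : 0 < ((n:ℝ)+1) * (n-2) := by apply mul_pos <;> linarith
  have hc2 : 0 < (n:ℝ)^2 - 3 * n - 2 := by nlinarith
  have hc3 : 0 < (n:ℝ) * ((n:ℝ) - 1) := by apply mul_pos <;> linarith
  have hp1 : 0 ≤ ((n:ℝ)+1) * (a + D)^2 := by positivity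
  have hp2 := mul_nonneg hc1.le (sq_nonneg a)
  have hp3 := mul_nonneg hc2.le (sq_nonneg D)
  refine ⟨?_, fun h0 => ?_⟩
  · have : 0 ≤ ((n+1) * (a + D)^2 + (n+1) * (n-2) * a^2 + ((n:ℝ)^2 - 3 * n - 2) * D^2)
        / (n * ((n:ℝ) - 1)) := by positivity
    linarith
  · have hle : ((n+1) * (a + D)^2 + (n+1) * (n-2) * a^2 + ((n:ℝ)^2 - 3 * n - 2) * D^2)
        / (n * ((n:ℝ) - 1)) ≤ 0 := by linarith
    rw [div_le_iff₀ hc3, zero_mul] at hle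
    have hD0 : D = 0 := by
      have : ((n:ℝ)^2 - 3 * n - 2) * D^2 = 0 := by linarith
      rcases mul_eq_zero.1 this with h | h
      · linarith
      · exact pow_eq_zero_iff (two_ne_zero) |>.1 h
    rw [hD0, mul_zero, add_zero] at h0
    intro i j
    have h5 := (Finset.sum_eq_zero_iff_of_nonneg
      (fun i _ => Finset.sum_nonneg fun j _ => sq_nonneg (A i j))).1 h0 i (Finset.mem_univ i)
    have h6 := (Finset.sum_eq_zero_iff_of_nonneg
      (fun j _ => sq_nonneg (A i j))).1 h5 j (Finset.mem_univ j)
    exact pow_eq_zero_iff (two_ne_zero) |>.1 h6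

theorem aux_cutoff {m : ℕ} {Ω V : Set (Fin (m+1) → ℝ)} (hb : Bornology.IsBounded Ω)
    (hV : IsOpen V) (hΩV : closure Ω ⊆ V) : ∃ χ : (Fin (m+1) → ℝ) → ℝ,
      HasCompactSupport χ ∧ (∀ x ∈ closure Ω, χ x = 1) ∧
      ∀ f : (Fin (m+1) → ℝ) → ℝ, ContDiffOn ℝ ∞ f V → ContDiff ℝ ∞ (fun x => χ x * f x) := by
  obtain ⟨K, hK, h1, h2⟩ := exists_compact_between hb.isCompact_closure hV hΩV
  obtain ⟨χ, c1, c2, -⟩ := exists_contMDiffMap_one_nhds_of_subset_interior (n := ⊤)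
    (modelWithCornersSelf ℝ (Fin (m+1) → ℝ)) isClosed_closure h1
  have hχ : ContDiff ℝ ∞ χ := χ.contMDiff.contDiff
  refine ⟨χ, HasCompactSupport.intro hK c2, fun x hx => c1.self_of_nhdsSet x hx, fun f hf => ?_⟩
  rw [contDiff_iff_contDiffAt]
  intro x
  by_cases hx : x ∈ V
  · exact hχ.contDiffAt.mul (hf.contDiffAt (hV.mem_nhds hx))
  · have hxK : x ∈ Kᶜ := fun h => hx (h2 h)
    refine (contDiffAt_const (c := (0:ℝ))).congr_of_eventuallyEq ?_
    filter_upwards [hK.isClosed.isOpen_compl.mem_nhds hxK] with y hy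
    simp [c2 y hy]

theorem aux_main (n : ℕ) (hn : 4 ≤ n) {Ω : Set (Fin (n + 1) → ℝ)} (hΩ : IsOpen Ω)
    (W : Fin (n + 1) → (Fin (n + 1) → ℝ) → ℝ) (hW : ∀ i, ContDiff ℝ ∞ (W i))
    (hc : ∀ i, HasCompactSupport (W i)) (hb : ∀ i, ∀ z ∈ frontier Ω, W i z = 0)
    (heq : ∀ j : Fin (n + 1), ∀ z ∈ Ω,
      (∑ i, fderiv ℝ (fun y => fderiv ℝ (W j) y (Pi.single i 1)) z (Pi.single i 1))
        + (4 / ((n : ℝ) - 1)) *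
          fderiv ℝ (fun y => fderiv ℝ (W 0) y (Pi.single j 1)) z (Pi.single 0 1)
        + (1 - 2 / ((n : ℝ) - 1)) *
          (∑ k, fderiv ℝ (fun y => fderiv ℝ (W k) y (Pi.single j 1)) z
            (Pi.single k 1)) = 0) :
    ∀ z ∈ Ω, ∀ i j, fderiv ℝ (W j) z (Pi.single i 1) = 0 := by
  have hdW : ∀ i v, ContDiff ℝ ∞ (fun y => fderiv ℝ (W i) y v) := fun i v =>
    ((hW i).fderiv_right (m := ∞) (by simp)).clm_apply contDiff_const
  have hsymm : ∀ k u v z, fderiv ℝ (fun y => fderiv ℝ (W k) y u) z v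
      = fderiv ℝ (fun y => fderiv ℝ (W k) y v) z u := by
    intro k u v z
    have hd : DifferentiableAt ℝ (fderiv ℝ (W k)) z :=
      (((hW k).fderiv_right (m := ∞) (by simp)).differentiable (by simp)) z
    have e : ∀ u v, fderiv ℝ (fun y => fderiv ℝ (W k) y u) z v
        = fderiv ℝ (fderiv ℝ (W k)) z v u := by
      intro u v
      rw [fderiv_clm_apply hd (differentiableAt_const u)]
      simp
    rw [e, e]
    exact ((hW k).contDiffAt.isSymmSndFDerivAt (by
      simp only [minSmoothness_of_isRCLikeNormedField]; exact WithTop.coe_le_coe.2 (le_top (a := (2 : ℕ∞))))) v u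
  let γ : ℝ := 4 / ((n : ℝ) - 1)
  let β : ℝ := 1 - 2 / ((n : ℝ) - 1)
  let φ : (Fin (n+1) → ℝ) → ℝ := fun y => γ * fderiv ℝ (W 0) y (Pi.single 0 1)
    + β * ∑ k, fderiv ℝ (W k) y (Pi.single k 1)
  have hφ : ContDiff ℝ ∞ φ := by
    refine (contDiff_const.mul (hdW _ _)).add (contDiff_const.mul (ContDiff.sum fun k _ => hdW _ _))
  let F : Fin (n+1) → (Fin (n+1) → ℝ) → ℝ := fun i y =>
    (∑ j, W j y * fderiv ℝ (W j) y (Pi.single i 1)) + W i y * φ y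
  have hF : ∀ i, ContDiff ℝ ∞ (F i) := fun i =>
    (ContDiff.sum fun j _ => (hW j).mul (hdW _ _)).add ((hW i).mul hφ)
  have hFc : ∀ i, HasCompactSupport (F i) := by
    intro i
    refine HasCompactSupport.intro (K := ⋃ j, tsupport (W j)) (isCompact_iUnion fun j => hc j) ?_
    intro x hx
    have h0 : ∀ j, W j x = 0 := fun j => by
      by_contra h
      exact hx (mem_iUnion.2 ⟨j, subset_tsupport _ h⟩)
    simp [F, h0]
  have hFb : ∀ i, ∀ z ∈ frontier Ω, F i z = 0 := by
    intro i z hz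
    simp [F, fun j => hb j z hz]
  let Q : (Fin (n+1) → ℝ) → ℝ := fun z =>
    ∑ i, ∑ j, (fderiv ℝ (W j) z (Pi.single i 1)) ^ 2 + φ z * ∑ k, fderiv ℝ (W k) z (Pi.single k 1)
  have hQc : Continuous Q := by
    have := fun i v => (hdW i v).continuous
    have := hφ.continuous
    fun_prop
  have hdiv : ∀ z ∈ Ω, Q z = ∑ i, fderiv ℝ (F i) z (Pi.single i 1) := by
    intro z hz
    have dW : ∀ i, DifferentiableAt ℝ (W i) z := fun i => (hW i).differentiable (by simp) z
    have ddW : ∀ i v, DifferentiableAt ℝ (fun y => fderiv ℝ (W i) y v) z :=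
      fun i v => (hdW i v).differentiable (by simp) z
    have dφ : DifferentiableAt ℝ φ z := hφ.differentiable (by simp) z
    have e1 : ∀ v, fderiv ℝ φ z v = γ * fderiv ℝ (fun y => fderiv ℝ (W 0) y (Pi.single 0 1)) z v
        + β * ∑ k, fderiv ℝ (fun y => fderiv ℝ (W k) y (Pi.single k 1)) z v := by
      intro v
      have h : HasFDerivAt φ (γ • fderiv ℝ (fun y => fderiv ℝ (W 0) y (Pi.single 0 1)) z
          + β • ∑ k, fderiv ℝ (fun y => fderiv ℝ (W k) y (Pi.single k 1)) z) z :=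
        ((ddW _ _).hasFDerivAt.const_mul γ).add
          ((HasFDerivAt.fun_sum fun k _ => (ddW _ _).hasFDerivAt).const_mul β)
      rw [h.fderiv]
      simp
    have e2 : ∀ i v, fderiv ℝ (F i) z v = (∑ j, (W j z *
        fderiv ℝ (fun y => fderiv ℝ (W j) y (Pi.single i 1)) z v
        + fderiv ℝ (W j) z (Pi.single i 1) * fderiv ℝ (W j) z v))
        + (W i z * fderiv ℝ φ z v + φ z * fderiv ℝ (W i) z v) := by
      intro i v
      have h : HasFDerivAt (F i) ((∑ j, (W j z •
          fderiv ℝ (fun y => fderiv ℝ (W j) y (Pi.single i 1)) z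
          + fderiv ℝ (W j) z (Pi.single i 1) • fderiv ℝ (W j) z))
          + (W i z • fderiv ℝ φ z + φ z • fderiv ℝ (W i) z)) z :=
        (HasFDerivAt.fun_sum fun j _ => (dW j).hasFDerivAt.mul (ddW _ _).hasFDerivAt).add
          ((dW i).hasFDerivAt.mul dφ.hasFDerivAt)
      rw [h.fderiv]
      simp
    have e3 : ∀ j, (∑ i, fderiv ℝ (fun y => fderiv ℝ (W j) y (Pi.single i 1)) z (Pi.single i 1))
        + fderiv ℝ φ z (Pi.single j 1) = 0 := by
      intro j
      rw [e1, ← heq j z hz, hsymm 0 (Pi.single 0 1)]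
      simp_rw [fun k => hsymm k (Pi.single k 1) (Pi.single j 1)]
      ring
    have e4 : ∑ j, W j z * ((∑ i, fderiv ℝ (fun y => fderiv ℝ (W j) y (Pi.single i 1)) z
        (Pi.single i 1)) + fderiv ℝ φ z (Pi.single j 1)) = 0 := by
      simp [e3]
    simp_rw [e2, Finset.sum_add_distrib]
    simp_rw [mul_add, Finset.sum_add_distrib, Finset.mul_sum] at e4
    rw [Finset.sum_comm] at e4
    simp only [Q, Finset.mul_sum, pow_two]
    linarith
  have hi : ∀ i, IntegrableOn (fun z => fderiv ℝ (F i) z (Pi.single i 1)) Ω := by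
    intro i
    refine (Continuous.integrable_of_hasCompactSupport ?_ ?_).integrableOn
    · exact ((hF i).continuous_fderiv (by simp)).clm_apply continuous_const
    · exact (hFc i).fderiv_apply ℝ _
  have hint : ∫ z in Ω, Q z = 0 := by
    rw [setIntegral_congr_fun hΩ.measurableSet hdiv, integral_finsetSum _ fun i _ => hi i]
    exact Finset.sum_eq_zero fun i _ => aux_div ((hF i).of_le (by simp)) (hFc i) hΩ (hFb i) _
  have hQi : IntegrableOn Q Ω :=
    (integrable_finsetSum Finset.univ fun i _ => hi i).congr
      ((ae_restrict_iff' hΩ.measurableSet).2 (Filter.Eventually.of_forall fun z hz => (hdiv z hz).symm))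
  have hq := fun z => aux_quad n hn (fun i j => fderiv ℝ (W j) z (Pi.single i 1))
  have hQ0 : ∀ z, 0 ≤ Q z := fun z => (hq z).1
  have hae : Q =ᵐ[volume.restrict Ω] 0 :=
    (integral_eq_zero_iff_of_nonneg hQ0 hQi).1 hint
  have hzero : EqOn Q 0 Ω :=
    MeasureTheory.Measure.eqOn_open_of_ae_eq hae hΩ hQc.continuousOn continuousOn_const
  intro z hz
  exact (hq z).2 (hzero hz)

/-- Uniqueness for the homogeneous Dirichlet problem for the adjoint elliptic
system `A*(t,x;∇)w = 0` arising in the tensor decomposition (`n ≥ 4`):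
`Δw₀ + (α−β)∂₀²w₀ + β Σₖ ∂ₖ∂₀wₖ = 0`,
`Δwⱼ + (α−β)∂₀∂ⱼw₀ + β Σₖ ∂ₖ∂ⱼwₖ = 0` (`1 ≤ j ≤ n`) on `Ω`, with `w = 0`
on `∂Ω`, imply `w ≡ 0` on `Ω`. Here `α = 1 + 2/(n−1)`, `β = 1 − 2/(n−1)` and
`Δ = Σᵢ ∂ᵢ²` is the full Laplacian on `ℝ^{1+n}`. -/
theorem stmt_12 (n : ℕ) (hn : 4 ≤ n) (Ω : Set (Fin (n + 1) → ℝ))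
    (hΩopen : IsOpen Ω) (hΩconn : IsConnected Ω)
    (hΩbdd : Bornology.IsBounded Ω)
    (w : Fin (n + 1) → (Fin (n + 1) → ℝ) → ℝ)
    (hw : ∃ V : Set (Fin (n + 1) → ℝ), IsOpen V ∧ closure Ω ⊆ V ∧
      ∀ i, ContDiffOn ℝ (⊤ : ℕ∞) (w i) V)
    (heq0 : ∀ z ∈ Ω,
      (∑ i, fderiv ℝ (fun y => fderiv ℝ (w 0) y (Pi.single i 1)) z (Pi.single i 1))
        + ((1 + 2 / ((n : ℝ) - 1)) - (1 - 2 / ((n : ℝ) - 1))) *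
          fderiv ℝ (fun y => fderiv ℝ (w 0) y (Pi.single 0 1)) z (Pi.single 0 1)
        + (1 - 2 / ((n : ℝ) - 1)) *
          (∑ k, fderiv ℝ (fun y => fderiv ℝ (w k) y (Pi.single 0 1)) z
            (Pi.single k 1)) = 0)
    (heqj : ∀ j : Fin (n + 1), j ≠ 0 → ∀ z ∈ Ω,
      (∑ i, fderiv ℝ (fun y => fderiv ℝ (w j) y (Pi.single i 1)) z (Pi.single i 1))
        + ((1 + 2 / ((n : ℝ) - 1)) - (1 - 2 / ((n : ℝ) - 1))) *
          fderiv ℝ (fun y => fderiv ℝ (w 0) y (Pi.single j 1)) z (Pi.single 0 1)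
        + (1 - 2 / ((n : ℝ) - 1)) *
          (∑ k, fderiv ℝ (fun y => fderiv ℝ (w k) y (Pi.single j 1)) z
            (Pi.single k 1)) = 0)
    (hbd : ∀ i : Fin (n + 1), ∀ z ∈ frontier Ω, w i z = 0) :
    ∀ i : Fin (n + 1), ∀ z ∈ Ω, w i z = 0 := by
  obtain ⟨V, hV, hΩV, hwV⟩ := hw
  obtain ⟨χ, hχc, hχ1, hχ⟩ := aux_cutoff hΩbdd hV hΩV
  let W : Fin (n + 1) → (Fin (n + 1) → ℝ) → ℝ := fun i x => χ x * w i x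
  have hWw : ∀ i, EqOn (W i) (w i) Ω := fun i z hz => by simp [W, hχ1 z (subset_closure hz)]
  have hf1 : ∀ i, ∀ z ∈ Ω, fderiv ℝ (W i) z = fderiv ℝ (w i) z := fun i z hz =>
    ((hWw i).eventuallyEq_of_mem (hΩopen.mem_nhds hz)).fderiv_eq
  have hf2 : ∀ i v, ∀ z ∈ Ω, fderiv ℝ (fun y => fderiv ℝ (W i) y v) z
      = fderiv ℝ (fun y => fderiv ℝ (w i) y v) z := fun i v z hz =>
    Filter.EventuallyEq.fderiv_eq (by
      filter_upwards [hΩopen.mem_nhds hz] with y hy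
      rw [hf1 i y hy])
  have hγ : (1 + 2 / ((n : ℝ) - 1)) - (1 - 2 / ((n : ℝ) - 1)) = 4 / ((n : ℝ) - 1) := by ring
  have hWs : ∀ i, ContDiff ℝ ∞ (W i) := fun i => hχ _ (hwV i)
  have hWb : ∀ i, ∀ z ∈ frontier Ω, W i z = 0 := fun i z hz => by simp [W, hbd i z hz]
  have hgrad := aux_main n hn hΩopen W hWs (fun i => hχc.mul_right) hWb (by
      intro j z hz
      simp_rw [fun i v => hf2 i v z hz, ← hγ]
      by_cases hj : j = 0
      · subst hj; exact heq0 z hz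
      · exact heqj j hj z hz)
  intro i
  have hfd : ∀ z ∈ Ω, fderiv ℝ (W i) z = 0 := by
    intro z hz
    apply ContinuousLinearMap.coe_injective
    refine LinearMap.pi_ext' fun k => ?_
    ext
    simpa using hgrad z hz k i
  obtain ⟨c, hcst⟩ := hΩopen.exists_is_const_of_fderiv_eq_zero hΩconn.isPreconnected
    ((hWs i).differentiable (by simp)).differentiableOn (fun z hz => hfd z hz)
  have hne : Ω ≠ univ := by
    rintro rfl
    exact NormedSpace.unbounded_univ ℝ (Fin (n+1) → ℝ) hΩbdd
  obtain ⟨p, hp⟩ := nonempty_frontier_iff.2 ⟨hΩconn.nonempty, hne⟩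
  have hpc : W i p = c :=
    closure_minimal (s := Ω) (t := {x | W i x = c}) hcst
      (isClosed_eq (hWs i).continuous continuous_const) hp.1
  intro z hz
  rw [← hWw i hz, hcst z hz, ← hpc, hWb i p hp]
end
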